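/- Let K be an infinite field, S = K[x_1,...,x_n], and fix an integer j. Let I ⊆ S and J ⊆ S be homogeneous ideals. Then for a general change of coordinates g ∈ GL_n(K), one has dim_K Tor_i^S(S/I, S/g(J))_j ≤ dim_K Tor_i^S(S/Gin_lex(I), S/Gin_oplex(J))_j for all i ≥ 0. -/

import Mathlib

open MvPolynomial TensorProduct CategoryTheory

noncomputable section

/-- The polynomial ring `S = K[x_1,...,x_n]`, standard graded. -/
abbrev PS (K : Type) [Field K] (n : ℕ) : Type := MvPolynomial (Fin n) K

variable (K : Type) [Field K] (n : ℕ)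

/-- An ideal of `S` is homogeneous if it contains all homogeneous components of its
elements. -/
def IsHomog (I : Ideal (PS K n)) : Prop :=
  ∀ f ∈ I, ∀ d : ℕ, MvPolynomial.homogeneousComponent d f ∈ I

/-- The change of coordinates of `S` induced by `g ∈ GL_n(K)`, determined by
`g(x_i) = ∑_j g_{ji} x_j`. -/
def coordChange (g : GL (Fin n) K) : PS K n →ₐ[K] PS K n :=
  MvPolynomial.aeval (fun i => ∑ j, ((g : Matrix (Fin n) (Fin n) K) j i) • MvPolynomial.X j)

/-- A property `P` holds for a general change of coordinates `g ∈ GL_n(K)` if there is a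
nonempty Zariski open subset `U ⊆ GL_n(K)` on which it holds; equivalently (as `GL_n(K)` is
an irreducible variety over the infinite field `K`) there is a nonzero polynomial `F` in the
matrix entries such that `P g` holds whenever `F` does not vanish at `g`. -/
def generally (P : GL (Fin n) K → Prop) : Prop :=
  ∃ F : MvPolynomial (Fin n × Fin n) K, F ≠ 0 ∧
    ∀ g : GL (Fin n) K,
      MvPolynomial.eval (fun p => (g : Matrix (Fin n) (Fin n) K) p.1 p.2) F ≠ 0 → P g

/-- The standard grading of `S = K[x_1,...,x_n]`, extended to `ℤ` (zero in negative
degrees). -/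
def polyGrade (d : ℤ) : Submodule K (PS K n) :=
  if 0 ≤ d then homogeneousSubmodule (Fin n) K d.toNat else ⊥

/-- The degree `d` component of the (internal) tensor-product grading on `A ⊗[K] B`. -/
def tensorGrade {A B : Type} [AddCommGroup A] [Module K A] [AddCommGroup B] [Module K B]
    (GA : ℤ → Submodule K A) (GB : ℤ → Submodule K B) (d : ℤ) :
    Submodule K (A ⊗[K] B) :=
  ⨆ p : ℤ, LinearMap.range (TensorProduct.map (GA p).subtype (GB (d - p)).subtype)

variable (N : Type) [AddCommGroup N] [Module K N] [Module (PS K n) N]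
  [IsScalarTower K (PS K n) N]

/-- The tower of `K`-vector spaces `D_i = S^{⊗ i} ⊗_K N` appearing in the bar complex
`M ⊗_K S^{⊗ i} ⊗_K N`, which computes `Tor^S_i(M, N)`. -/
def barD : ℕ → ModuleCat K
  | 0 => ModuleCat.of K N
  | (i + 1) => ModuleCat.of K (PS K n ⊗[K] (barD i))

/-- The internal `ℤ`-grading on `D_i = S^{⊗ i} ⊗_K N` induced by the standard grading of
`S` and a grading `GN` of `N`. -/
def barDGrade (GN : ℤ → Submodule K N) : (i : ℕ) → ℤ → Submodule K (barD K n N i)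
  | 0 => GN
  | (i + 1) => tensorGrade K (polyGrade K n) (barDGrade GN i)

/-- Scalar multiplication `S → N → N` as a `K`-bilinear map. -/
def smulBilin : PS K n →ₗ[K] N →ₗ[K] N :=
  LinearMap.mk₂ K (fun s x => s • x)
    (fun s₁ s₂ x => add_smul s₁ s₂ x)
    (fun c s x => smul_assoc c s x)
    (fun s x y => smul_add s x y)
    (fun c s x => (smul_comm c s x).symm)

/-- The "contraction" part of the bar differential, `c_i : D_{i+1} → D_i`, defined
recursively by `c_0(s ⊗ x) = s • x` and
`c_{i+1}(s ⊗ s' ⊗ t) = (s s') ⊗ t - s ⊗ c_i(s' ⊗ t)`. -/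
def barC : (i : ℕ) → ((barD K n N (i + 1)) →ₗ[K] (barD K n N i))
  | 0 => TensorProduct.lift (smulBilin K n N)
  | (i + 1) =>
      (TensorProduct.map (LinearMap.mul' K (PS K n)) LinearMap.id).comp
        (TensorProduct.assoc K (PS K n) (PS K n) (barD K n N i)).symm.toLinearMap
      - TensorProduct.map LinearMap.id (barC i)

variable (M : Type) [AddCommGroup M] [Module K M] [Module (PS K n) M]
  [IsScalarTower K (PS K n) M]

/-- Right scalar multiplication `M ⊗[K] S → M` as a `K`-linear map. -/
def smulMapM : M ⊗[K] PS K n →ₗ[K] M :=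
  TensorProduct.lift (LinearMap.mk₂ K (fun m s => s • m)
    (fun m₁ m₂ s => smul_add s m₁ m₂)
    (fun c m s => smul_comm s c m)
    (fun m s₁ s₂ => add_smul s₁ s₂ m)
    (fun c m s => smul_assoc c s m))

/-- The bar differential `b_i : M ⊗ D_{i+1} → M ⊗ D_i`,
`b(m ⊗ s ⊗ t) = (s • m) ⊗ t - m ⊗ c_i(s ⊗ t)`.  The complex
`⋯ → M ⊗_K S^{⊗ i} ⊗_K N → ⋯ → M ⊗_K S ⊗_K N → M ⊗_K N → 0`
is the bar complex `M ⊗_S Bar(S, N)`, whose `i`-th homology is `Tor^S_i(M, N)`;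
it is a complex of graded vector spaces with degree-preserving differentials. -/
def barB (i : ℕ) : (M ⊗[K] (barD K n N (i + 1))) →ₗ[K] (M ⊗[K] (barD K n N i)) :=
  (TensorProduct.map (smulMapM K n M) LinearMap.id).comp
      (TensorProduct.assoc K M (PS K n) (barD K n N i)).symm.toLinearMap
  - TensorProduct.map LinearMap.id (barC K n N i)

/-- `dim_K Tor_i^S(M, N)_j`, the dimension of the degree-`j` component of the graded module
`Tor_i^S(M, N)` for graded modules `M`, `N`: it is computed as the homology of the degree-`j`
strand of the bar complex, namely `dim (ker b_i)_j - dim (im b_{i+1})_j`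
(for `i = 0`, `dim (M ⊗_K N)_j - dim (im b_1)_j`). -/
def torStrandDim (GM : ℤ → Submodule K M) (GN : ℤ → Submodule K N) : ℕ → ℤ → ℕ
  | 0, j =>
      Module.finrank K ↥(tensorGrade K GM (barDGrade K n N GN 0) j) -
        Module.finrank K
          ↥(LinearMap.range (barB K n N M 0) ⊓ tensorGrade K GM (barDGrade K n N GN 0) j)
  | (i + 1), j =>
      Module.finrank K
          ↥(LinearMap.ker (barB K n N M i) ⊓
              tensorGrade K GM (barDGrade K n N GN (i + 1)) j) -
        Module.finrank K
          ↥(LinearMap.range (barB K n N M (i + 1)) ⊓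
              tensorGrade K GM (barDGrade K n N GN (i + 1)) j)

/-- The quotient grading on `S/J`. -/
def quotGrade (J : Ideal (PS K n)) : ℤ → Submodule K (PS K n ⧸ J) := fun d =>
  (polyGrade K n d).map (Ideal.Quotient.mkₐ K J).toLinearMap

/-- The grading on an ideal `I ⊆ S` viewed as an `S`-module. -/
def idealGrade (I : Ideal (PS K n)) : ℤ → Submodule K ↥I := fun d =>
  (polyGrade K n d).comap ((Submodule.subtype I).restrictScalars K)

/-- `dim_K Tor_i^S(S/I, S/J)_j`. -/
def torQQ (I J : Ideal (PS K n)) (i : ℕ) (j : ℤ) : ℕ :=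
  torStrandDim K n (PS K n ⧸ J) (PS K n ⧸ I) (quotGrade K n I) (quotGrade K n J) i j

/-- `dim_K Tor_i^S(I, S/J)_j`. -/
def torIQ (I J : Ideal (PS K n)) (i : ℕ) (j : ℤ) : ℕ :=
  torStrandDim K n (PS K n ⧸ J) ↥I (idealGrade K n I) (quotGrade K n J) i j

/-- `a <_lex b` for the lexicographic order induced by `x_1 > x_2 > ⋯ > x_n`. -/
def lexLt (a b : Fin n →₀ ℕ) : Prop := Finsupp.Lex (· < ·) (· < ·) a b

/-- `a <_oplex b` for the (opposite) lexicographic order induced by `x_n > ⋯ > x_1`. -/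
def oplexLt (a b : Fin n →₀ ℕ) : Prop := Finsupp.Lex (· > ·) (· < ·) a b

/-- The total degree of an exponent vector. -/
def expDeg (m : Fin n →₀ ℕ) : ℕ := ∑ i, m i

/-- A monomial ideal: together with any polynomial it contains each of its monomials. -/
def IsMonomialIdeal (I : Ideal (PS K n)) : Prop :=
  ∀ f ∈ I, ∀ m ∈ f.support, MvPolynomial.monomial m (1 : K) ∈ I

/-- A lex ideal: a monomial ideal whose monomials form a lex set. -/
def IsLexIdeal (I : Ideal (PS K n)) : Prop :=
  IsMonomialIdeal K n I ∧ ∀ u v : Fin n →₀ ℕ, expDeg n u = expDeg n v →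
    MvPolynomial.monomial u (1 : K) ∈ I → lexLt n u v →
      MvPolynomial.monomial v (1 : K) ∈ I

/-- An opposite lex ideal: a monomial ideal whose monomials form an opposite lex set. -/
def IsOplexIdeal (I : Ideal (PS K n)) : Prop :=
  IsMonomialIdeal K n I ∧ ∀ u v : Fin n →₀ ℕ, expDeg n u = expDeg n v →
    MvPolynomial.monomial u (1 : K) ∈ I → oplexLt n u v →
      MvPolynomial.monomial v (1 : K) ∈ I

/-- The initial ideal `in_r(I)` of `I` with respect to a (strict) monomial order `r`:
the ideal generated by the `r`-maximal monomials of the nonzero elements of `I`. -/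
def initialIdealO (r : (Fin n →₀ ℕ) → (Fin n →₀ ℕ) → Prop) (I : Ideal (PS K n)) :
    Ideal (PS K n) :=
  Ideal.span {g | ∃ f ∈ I, ∃ m ∈ f.support,
    (∀ m' ∈ f.support, m' = m ∨ r m' m) ∧ g = MvPolynomial.monomial m (1 : K)}

open MvPolynomial TensorProduct CategoryTheory

section Grading

variable {K : Type} [Field K]
variable {A B C : Type} [AddCommGroup A] [Module K A] [AddCommGroup B] [Module K B]
  [AddCommGroup C] [Module K C]

/-- A nonnegatively graded vector space with finite dimensional components. -/
structure IsGr (G : ℤ → Submodule K A) : Prop where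
  neg : ∀ d < 0, G d = ⊥
  fin : ∀ d, FiniteDimensional K (G d)
  top : ⨆ d, G d = ⊤
  proj : ∃ p : ℤ → A →ₗ[K] A, (∀ d, ∀ x ∈ G d, p d x = x) ∧
    ∀ d e, d ≠ e → ∀ x ∈ G e, p d x = 0

theorem tmul_mem_tensorGrade {GA : ℤ → Submodule K A} {GB : ℤ → Submodule K B} {p q d : ℤ}
    {a : A} {b : B} (ha : a ∈ GA p) (hb : b ∈ GB q) (h : p + q = d) :
    a ⊗ₜ[K] b ∈ tensorGrade K GA GB d := by
  obtain rfl : q = d - p := by omega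
  refine Submodule.mem_iSup_of_mem p ?_
  exact ⟨(⟨a, ha⟩ : GA p) ⊗ₜ (⟨b, hb⟩ : GB (d - p)), by simp⟩

theorem tensorGrade_induction {GA : ℤ → Submodule K A} {GB : ℤ → Submodule K B} {d : ℤ}
    {P : A ⊗[K] B → Prop} (h0 : P 0) (hadd : ∀ x y, P x → P y → P (x + y))
    (ht : ∀ p, ∀ a ∈ GA p, ∀ b ∈ GB (d - p), P (a ⊗ₜ b))
    {x : A ⊗[K] B} (hx : x ∈ tensorGrade K GA GB d) : P x := by
  unfold tensorGrade at hx
  induction hx using Submodule.iSup_induction' with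
  | mem p x hx =>
    obtain ⟨y, rfl⟩ := hx
    induction y using TensorProduct.induction_on with
    | zero => simpa using h0
    | tmul a b => simpa using ht p a a.2 b b.2
    | add a b ha hb => rw [map_add]; exact hadd _ _ ha hb
  | zero => exact h0
  | add x y _ _ hx hy => exact hadd _ _ hx hy

theorem tensorGrade_le {GA : ℤ → Submodule K A} {GB : ℤ → Submodule K B} {d : ℤ}
    {Q : Submodule K (A ⊗[K] B)}
    (ht : ∀ p, ∀ a ∈ GA p, ∀ b ∈ GB (d - p), a ⊗ₜ b ∈ Q) : tensorGrade K GA GB d ≤ Q :=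
  fun _ hx => tensorGrade_induction (P := fun x => x ∈ Q) Q.zero_mem
    (fun _ _ => Q.add_mem) ht hx

theorem top_le_of_graded {G : ℤ → Submodule K A} (h : ⨆ d, G d = ⊤) {Q : Submodule K A}
    (hQ : ∀ d, G d ≤ Q) (x : A) : x ∈ Q := by
  have : (⊤ : Submodule K A) ≤ Q := h ▸ iSup_le hQ
  exact this trivial

theorem IsGr.tensor {GA : ℤ → Submodule K A} {GB : ℤ → Submodule K B}
    (hA : IsGr GA) (hB : IsGr GB) : IsGr (tensorGrade K GA GB) where
  neg := by
    intro d hd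
    rw [eq_bot_iff]
    refine tensorGrade_le fun p a ha b hb => ?_
    rcases lt_or_ge p 0 with hp | hp
    · rw [hA.neg p hp, Submodule.mem_bot] at ha
      simp [ha]
    · rw [hB.neg (d - p) (by omega), Submodule.mem_bot] at hb
      simp [hb]
  fin := by
    intro d
    have : ∀ d, FiniteDimensional K (GA d) := hA.fin
    have : ∀ d, FiniteDimensional K (GB d) := hB.fin
    have hle : tensorGrade K GA GB d ≤ ⨆ p : Set.Icc (0 : ℤ) d,
        LinearMap.range (TensorProduct.map (GA p).subtype (GB (d - p)).subtype) := by
      refine tensorGrade_le fun p a ha b hb => ?_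
      rcases lt_or_ge p 0 with hp | hp
      · rw [hA.neg p hp, Submodule.mem_bot] at ha
        simp [ha]
      rcases lt_or_ge d p with hq | hq
      · rw [hB.neg (d - p) (by omega), Submodule.mem_bot] at hb
        simp [hb]
      refine Submodule.mem_iSup_of_mem ⟨p, hp, hq⟩ ?_
      exact ⟨(⟨a, ha⟩ : GA p) ⊗ₜ (⟨b, hb⟩ : GB (d - p)), by simp⟩
    exact Submodule.finiteDimensional_of_le hle
  top := by
    rw [eq_top_iff]
    intro x _
    induction x using TensorProduct.induction_on with
    | zero => exact Submodule.zero_mem _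
    | add a b ha hb => exact Submodule.add_mem _ (ha trivial) (hb trivial)
    | tmul a b =>
      refine top_le_of_graded hA.top
        (Q := (⨆ d, tensorGrade K GA GB d).comap ((TensorProduct.mk K A B).flip b)) ?_ a
      intro p a ha
      refine top_le_of_graded hB.top
        (Q := (⨆ d, tensorGrade K GA GB d).comap ((TensorProduct.mk K A B) a)) ?_ b
      intro q b hb
      exact Submodule.mem_iSup_of_mem (p + q) (tmul_mem_tensorGrade ha hb rfl)
  proj := by
    obtain ⟨p, hp1, hp2⟩ := hA.proj
    obtain ⟨q, hq1, hq2⟩ := hB.proj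
    refine ⟨fun d => ∑ e ∈ Finset.Icc 0 d, TensorProduct.map (p e) (q (d - e)), ?_, ?_⟩
    · intro d x hx
      refine tensorGrade_induction (P := fun x =>
        (∑ e ∈ Finset.Icc 0 d, TensorProduct.map (p e) (q (d - e))) x = x) (by simp)
        (fun x y hx hy => by rw [map_add, hx, hy]) ?_ hx
      intro e a ha b hb
      rcases lt_or_ge e 0 with he | he
      · rw [hA.neg e he, Submodule.mem_bot] at ha
        simp [ha]
      rcases lt_or_ge d e with hq | hq
      · rw [hB.neg (d - e) (by omega), Submodule.mem_bot] at hb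
        simp [hb]
      rw [LinearMap.sum_apply, Finset.sum_eq_single e]
      · simp [hp1 e a ha, hq1 _ b hb]
      · intro f _ hf
        simp [hp2 f e hf a ha]
      · intro h
        exact absurd (Finset.mem_Icc.2 ⟨he, hq⟩) h
    · intro d d' hd x hx
      refine tensorGrade_induction (P := fun x =>
        (∑ e ∈ Finset.Icc 0 d, TensorProduct.map (p e) (q (d - e))) x = 0) (by simp)
        (fun x y hx hy => by rw [map_add, hx, hy, add_zero]) ?_ hx
      intro e a ha b hb
      rw [LinearMap.sum_apply]
      refine Finset.sum_eq_zero fun f _ => ?_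
      by_cases hf : f = e
      · subst hf
        simp [hq2 (d - f) (d' - f) (by omega) b hb]
      · simp [hp2 f e hf a ha]

/-- The image of a degree preserving map meets the degree `j` part in the image of the degree
`j` part. -/
theorem range_inf_eq {GA : ℤ → Submodule K A} {GB : ℤ → Submodule K B}
    (hA : IsGr GA) (hB : IsGr GB) (f : A →ₗ[K] B) (hf : ∀ d, ∀ x ∈ GA d, f x ∈ GB d) (j : ℤ) :
    LinearMap.range f ⊓ GB j = (GA j).map f := by
  obtain ⟨p, hp1, hp2⟩ := hA.proj
  obtain ⟨q, hq1, hq2⟩ := hB.proj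
  have hp3 : ∀ x, p j x ∈ GA j := fun x =>
    top_le_of_graded hA.top (Q := (GA j).comap (p j)) (fun d x hx => by
      by_cases h : j = d
      · subst h
        simpa [hp1 _ x hx] using hx
      · simp [hp2 j d h x hx]) x
  have hc : ∀ x, q j (f x) = f (p j x) := fun x =>
    top_le_of_graded hA.top (Q := LinearMap.eqLocus (q j ∘ₗ f) (f ∘ₗ p j)) (fun d x hx => by
      by_cases h : j = d
      · subst h
        simp [hp1 _ x hx, hq1 _ _ (hf _ x hx)]
      · simp [hp2 j d h x hx, hq2 _ _ h _ (hf _ x hx)]) x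
  apply le_antisymm
  · rintro _ ⟨⟨x, rfl⟩, hx⟩
    exact ⟨p j x, hp3 x, by rw [← hc, hq1 _ _ hx]⟩
  · rintro _ ⟨x, hx, rfl⟩
    exact ⟨⟨x, rfl⟩, hf _ x hx⟩

/-- Rank-nullity on a graded piece. -/
theorem finrank_ker_inf (f : A →ₗ[K] B) (G : Submodule K A) [FiniteDimensional K G] :
    Module.finrank K ↥(LinearMap.ker f ⊓ G) =
      Module.finrank K G - Module.finrank K (G.map f) := by
  have h := LinearMap.finrank_range_add_finrank_ker (f.domRestrict G)
  rw [LinearMap.range_domRestrict] at h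
  have h2 : Module.finrank K (LinearMap.ker (f.domRestrict G)) =
      Module.finrank K ↥(LinearMap.ker f ⊓ G) := by
    rw [LinearMap.ker_domRestrict]
    have : (LinearMap.ker f ⊓ G) = ((LinearMap.ker f).comap G.subtype).map G.subtype := by
      rw [Submodule.map_comap_subtype, inf_comm]
    rw [this]
    exact (LinearEquiv.finrank_eq (Submodule.equivMapOfInjective _ G.injective_subtype _))
  omega

end Grading

section Bar

variable {K : Type} [Field K] {n : ℕ}
variable {M M' N N' B B' : Type} [AddCommGroup M] [Module K M] [AddCommGroup N] [Module K N]
  [AddCommGroup M'] [Module K M'] [AddCommGroup N'] [Module K N']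
  [AddCommGroup B] [Module K B] [AddCommGroup B'] [Module K B']

/-- One step of the bar differential for arbitrary bilinear data. -/
def stepB (μ : PS K n →ₗ[K] M →ₗ[K] M) (c : PS K n ⊗[K] B →ₗ[K] B) :
    M ⊗[K] (PS K n ⊗[K] B) →ₗ[K] M ⊗[K] B :=
  (TensorProduct.map (TensorProduct.lift μ.flip) LinearMap.id).comp
      (TensorProduct.assoc K M (PS K n) B).symm.toLinearMap
  - TensorProduct.map LinearMap.id c

@[simp] theorem stepB_tmul (μ : PS K n →ₗ[K] M →ₗ[K] M) (c : PS K n ⊗[K] B →ₗ[K] B)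
    (m : M) (s : PS K n) (t : B) :
    stepB μ c (m ⊗ₜ (s ⊗ₜ t)) = (μ s m) ⊗ₜ t - m ⊗ₜ c (s ⊗ₜ t) := by
  simp [stepB]

/-- The contraction for an arbitrary bilinear map. -/
def bC (ν : PS K n →ₗ[K] N →ₗ[K] N) : (i : ℕ) → ((barD K n N (i + 1)) →ₗ[K] (barD K n N i))
  | 0 => TensorProduct.lift ν
  | (i + 1) => stepB (B := barD K n N i) (LinearMap.mul K (PS K n)) (bC ν i)

/-- The bar differential for arbitrary bilinear maps. -/
def bB (μ : PS K n →ₗ[K] M →ₗ[K] M) (ν : PS K n →ₗ[K] N →ₗ[K] N) (i : ℕ) :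
    (M ⊗[K] (barD K n N (i + 1))) →ₗ[K] (M ⊗[K] (barD K n N i)) :=
  stepB (B := barD K n N i) μ (bC ν i)

theorem stepC_eq {c c' : PS K n ⊗[K] B →ₗ[K] B} (h : c = c') :
    (TensorProduct.map (LinearMap.mul' K (PS K n)) LinearMap.id).comp
        (TensorProduct.assoc K (PS K n) (PS K n) B).symm.toLinearMap
      - TensorProduct.map LinearMap.id c = stepB (LinearMap.mul K (PS K n)) c' := by
  subst h
  unfold stepB
  congr 3
  refine TensorProduct.ext' fun x y => ?_
  simp

theorem barC_eq [Module (PS K n) N] [IsScalarTower K (PS K n) N] (i : ℕ) :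
    barC K n N i = bC (smulBilin K n N) i := by
  induction i with
  | zero => rfl
  | succ i ih => exact stepC_eq ih

theorem barB_eq [Module (PS K n) N] [IsScalarTower K (PS K n) N]
    [Module (PS K n) M] [IsScalarTower K (PS K n) M] (i : ℕ) :
    barB K n N M i = bB (smulBilin K n M) (smulBilin K n N) i := by
  unfold barB bB stepB
  rw [barC_eq]
  congr 3

/-- Degree preserving bilinear maps. -/
def HomAct (G : ℤ → Submodule K M) (μ : PS K n →ₗ[K] M →ₗ[K] M) : Prop :=
  ∀ a p, ∀ s ∈ polyGrade K n a, ∀ m ∈ G p, μ s m ∈ G (p + a)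

theorem stepB_grade {GM : ℤ → Submodule K M} {GB : ℤ → Submodule K B}
    {μ : PS K n →ₗ[K] M →ₗ[K] M} {c : PS K n ⊗[K] B →ₗ[K] B} (hμ : HomAct GM μ)
    (hc : ∀ d, ∀ x ∈ tensorGrade K (polyGrade K n) GB d, c x ∈ GB d) (d : ℤ)
    (x : M ⊗[K] (PS K n ⊗[K] B))
    (hx : x ∈ tensorGrade K GM (tensorGrade K (polyGrade K n) GB) d) :
    stepB μ c x ∈ tensorGrade K GM GB d := by
  refine tensorGrade_induction (P := fun x => stepB μ c x ∈ tensorGrade K GM GB d) (by simp)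
    (fun x y hx hy => by rw [map_add]; exact Submodule.add_mem _ hx hy) ?_ hx
  intro p m hm y hy
  refine tensorGrade_induction (P := fun y => stepB μ c (m ⊗ₜ y) ∈ tensorGrade K GM GB d)
    (by simp) (fun x y hx hy => by
      rw [tmul_add, map_add]; exact Submodule.add_mem _ hx hy) ?_ hy
  intro a s hs t ht
  rw [stepB_tmul]
  refine Submodule.sub_mem _ ?_ ?_
  · exact tmul_mem_tensorGrade (hμ a p s hs m hm) ht (by ring)
  · exact tmul_mem_tensorGrade hm (hc _ _ (tmul_mem_tensorGrade hs ht rfl)) (by ring)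

theorem mul_homAct : HomAct (polyGrade K n) (LinearMap.mul K (PS K n)) := by
  intro a p s hs m hm
  simp only [polyGrade] at *
  split_ifs at hs with ha
  · split_ifs at hm with hp
    · rw [if_pos (by omega), show (p + a).toNat = a.toNat + p.toNat by omega]
      exact MvPolynomial.IsHomogeneous.mul hs hm
    · simp at hm; simp [hm]
  · simp at hs; simp [hs]

theorem bC_grade {GN : ℤ → Submodule K N} {ν : PS K n →ₗ[K] N →ₗ[K] N} (hν : HomAct GN ν)
    (i : ℕ) : ∀ d, ∀ x ∈ barDGrade K n N GN (i + 1) d, bC ν i x ∈ barDGrade K n N GN i d := by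
  induction i with
  | zero =>
    intro d x hx
    refine tensorGrade_induction (P := fun x => TensorProduct.lift ν x ∈ GN d) (by simp)
      (fun x y hx hy => by rw [map_add]; exact Submodule.add_mem _ hx hy) ?_ hx
    intro p s hs m hm
    have := hν p (d - p) s hs m hm
    simpa using this
  | succ i ih => exact fun d x hx => stepB_grade mul_homAct ih d x hx

theorem bB_grade {GM : ℤ → Submodule K M} {GN : ℤ → Submodule K N}
    {μ : PS K n →ₗ[K] M →ₗ[K] M} {ν : PS K n →ₗ[K] N →ₗ[K] N} (hμ : HomAct GM μ)
    (hν : HomAct GN ν) (i : ℕ) : ∀ d, ∀ x ∈ tensorGrade K GM (barDGrade K n N GN (i + 1)) d,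
      bB μ ν i x ∈ tensorGrade K GM (barDGrade K n N GN i) d :=
  fun d x hx => stepB_grade hμ (bC_grade hν i) d x hx

/-- Rank of the degree `j` strand of the differential. -/
def rk (GM : ℤ → Submodule K M) (GN : ℤ → Submodule K N) (μ : PS K n →ₗ[K] M →ₗ[K] M)
    (ν : PS K n →ₗ[K] N →ₗ[K] N) (i : ℕ) (j : ℤ) : ℕ :=
  Module.finrank K ((tensorGrade K GM (barDGrade K n N GN (i + 1)) j).map (bB μ ν i))

/-- Dimension of the degree `j` strand. -/
def cdim (n : ℕ) (GM : ℤ → Submodule K M) (GN : ℤ → Submodule K N) (i : ℕ) (j : ℤ) : ℕ :=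
  Module.finrank K (tensorGrade K GM (barDGrade K n N GN i) j)

/-! Isomorphisms -/

theorem stepB_iso {φ : M →ₗ[K] M'} {α : PS K n →ₗ[K] PS K n} {ψ : B →ₗ[K] B'}
    {μ : PS K n →ₗ[K] M →ₗ[K] M} {μ' : PS K n →ₗ[K] M' →ₗ[K] M'}
    {c : PS K n ⊗[K] B →ₗ[K] B} {c' : PS K n ⊗[K] B' →ₗ[K] B'}
    (hμ : ∀ s m, φ (μ s m) = μ' (α s) (φ m))
    (hc : ∀ x, ψ (c x) = c' (TensorProduct.map α ψ x)) (x : M ⊗[K] (PS K n ⊗[K] B)) :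
    TensorProduct.map φ ψ (stepB μ c x) =
      stepB μ' c' (TensorProduct.map φ (TensorProduct.map α ψ) x) := by
  induction x using TensorProduct.induction_on with
  | zero => simp
  | add a b ha hb => simp only [map_add, ha, hb]
  | tmul m y =>
    induction y using TensorProduct.induction_on with
    | zero => simp
    | add a b ha hb => simp only [map_add, tmul_add, ha, hb]
    | tmul s t => simp [hμ, hc]

/-- Linear equivalences matching two gradings. -/
def GrEq (GM : ℤ → Submodule K M) (GM' : ℤ → Submodule K M') (φ : M ≃ₗ[K] M') : Prop :=
  ∀ p, (GM p).map φ.toLinearMap = GM' p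

theorem GrEq.tensor {GM : ℤ → Submodule K M} {GM' : ℤ → Submodule K M'} {φ : M ≃ₗ[K] M'}
    {GB : ℤ → Submodule K B} {GB' : ℤ → Submodule K B'} {ψ : B ≃ₗ[K] B'}
    (hφ : GrEq GM GM' φ) (hψ : GrEq GB GB' ψ) :
    GrEq (tensorGrade K GM GB) (tensorGrade K GM' GB') (TensorProduct.congr φ ψ) := by
  intro d
  apply le_antisymm
  · rw [Submodule.map_le_iff_le_comap]
    refine tensorGrade_le fun p a ha b hb => ?_
    refine tmul_mem_tensorGrade (p := p) (q := d - p) ?_ ?_ (by ring)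
    · rw [← hφ]; exact ⟨a, ha, rfl⟩
    · rw [← hψ]; exact ⟨b, hb, rfl⟩
  · refine tensorGrade_le fun p a ha b hb => ?_
    rw [← hφ] at ha
    rw [← hψ] at hb
    obtain ⟨a, ha, rfl⟩ := ha
    obtain ⟨b, hb, rfl⟩ := hb
    exact ⟨a ⊗ₜ b, tmul_mem_tensorGrade ha hb (by ring), by simp⟩

/-- The induced equivalence on the tower. -/
def bE (α : PS K n ≃ₗ[K] PS K n) (ψ : N ≃ₗ[K] N') :
    (i : ℕ) → (barD K n N i ≃ₗ[K] barD K n N' i)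
  | 0 => ψ
  | (i + 1) => TensorProduct.congr α (bE α ψ i)

theorem bE_grEq {α : PS K n ≃ₗ[K] PS K n} {ψ : N ≃ₗ[K] N'} {GN : ℤ → Submodule K N}
    {GN' : ℤ → Submodule K N'} (hα : GrEq (polyGrade K n) (polyGrade K n) α)
    (hψ : GrEq GN GN' ψ) (i : ℕ) :
    GrEq (barDGrade K n N GN i) (barDGrade K n N' GN' i) (bE α ψ i) := by
  induction i with
  | zero => exact hψ
  | succ i ih => exact GrEq.tensor hα ih

theorem bC_iso {α : PS K n ≃ₗ[K] PS K n} (hα : ∀ s t, α (s * t) = α s * α t) {ψ : N ≃ₗ[K] N'}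
    {ν : PS K n →ₗ[K] N →ₗ[K] N} {ν' : PS K n →ₗ[K] N' →ₗ[K] N'}
    (hν : ∀ s m, ψ (ν s m) = ν' (α s) (ψ m)) (i : ℕ) (x : barD K n N (i + 1)) :
    bE α ψ i (bC ν i x) = bC ν' i (bE α ψ (i + 1) x) := by
  induction i with
  | zero =>
    change ψ (TensorProduct.lift ν x) = TensorProduct.lift ν' (TensorProduct.congr α ψ x)
    change (PS K n) ⊗[K] N at x
    induction x using TensorProduct.induction_on with
    | zero => simp
    | add a b ha hb => simp only [map_add, ha, hb]
    | tmul m y => simp [hν]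
  | succ i ih =>
    exact stepB_iso (φ := α.toLinearMap) (α := α.toLinearMap) (ψ := (bE α ψ i).toLinearMap)
      (by intro s m; simp [hα]) ih x

theorem rk_iso {GM : ℤ → Submodule K M} {GM' : ℤ → Submodule K M'} {φ : M ≃ₗ[K] M'}
    {GN : ℤ → Submodule K N} {GN' : ℤ → Submodule K N'} {ψ : N ≃ₗ[K] N'}
    {α : PS K n ≃ₗ[K] PS K n} (hα : ∀ s t, α (s * t) = α s * α t)
    (hαg : GrEq (polyGrade K n) (polyGrade K n) α)
    (hφ : GrEq GM GM' φ) (hψ : GrEq GN GN' ψ)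
    {μ : PS K n →ₗ[K] M →ₗ[K] M} {μ' : PS K n →ₗ[K] M' →ₗ[K] M'}
    {ν : PS K n →ₗ[K] N →ₗ[K] N} {ν' : PS K n →ₗ[K] N' →ₗ[K] N'}
    (hμ : ∀ s m, φ (μ s m) = μ' (α s) (φ m))
    (hν : ∀ s m, ψ (ν s m) = ν' (α s) (ψ m)) (i : ℕ) (j : ℤ) :
    rk GM GN μ ν i j = rk GM' GN' μ' ν' i j := by
  unfold rk
  rw [← (GrEq.tensor hφ (bE_grEq hαg hψ (i + 1))) j, ← Submodule.map_comp]
  have : (bB μ' ν' i).comp (TensorProduct.congr φ (bE α ψ (i + 1))).toLinearMap =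
      (TensorProduct.congr φ (bE α ψ i)).toLinearMap.comp (bB μ ν i) := by
    refine LinearMap.ext fun x => ?_
    exact (stepB_iso (φ := φ.toLinearMap) (α := α.toLinearMap) (ψ := (bE α ψ i).toLinearMap)
      hμ (bC_iso hα hν i) x).symm
  rw [this, Submodule.map_comp]
  exact (LinearEquiv.finrank_map_eq _ _).symm

theorem cdim_iso {GM : ℤ → Submodule K M} {GM' : ℤ → Submodule K M'} {φ : M ≃ₗ[K] M'}
    {GN : ℤ → Submodule K N} {GN' : ℤ → Submodule K N'} {ψ : N ≃ₗ[K] N'}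
    (hφ : GrEq GM GM' φ) (hψ : GrEq GN GN' ψ) (i : ℕ) (j : ℤ) :
    cdim n GM GN i j = cdim n GM' GN' i j := by
  unfold cdim
  rw [← (GrEq.tensor hφ (bE_grEq (n := n) (α := LinearEquiv.refl K _)
    (fun p => by simp) hψ i)) j]
  exact (LinearEquiv.finrank_map_eq _ _).symm

end Bar

section Families

variable {K : Type} [Field K] {n : ℕ} {X : Type}
variable {M N B V W : Type} [AddCommGroup M] [Module K M] [AddCommGroup N] [Module K N]
  [AddCommGroup B] [Module K B] [AddCommGroup V] [Module K V] [AddCommGroup W] [Module K W]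

/-- Families of vectors with coefficients in an algebra of functions. -/
def famSub (R : Subalgebra K (X → K)) (V : Type) [AddCommGroup V] [Module K V] :
    Submodule K (X → V) :=
  Submodule.span K {h | ∃ a ∈ R, ∃ v : V, h = fun x => a x • v}

/-- `f` is an algebraic family with value `v` at `x0`. -/
def PF (R : Subalgebra K (X → K)) (x0 : X) (f : X → V) (v : V) : Prop :=
  f ∈ famSub R V ∧ f x0 = v

variable {R : Subalgebra K (X → K)} {x0 : X}

theorem PF.zero : PF R x0 (fun _ => (0 : V)) 0 := ⟨Submodule.zero_mem _, rfl⟩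

theorem PF.add {f g : X → V} {v w : V} (hf : PF R x0 f v) (hg : PF R x0 g w) :
    PF R x0 (fun x => f x + g x) (v + w) :=
  ⟨Submodule.add_mem _ hf.1 hg.1, by simp [hf.2, hg.2]⟩

theorem PF.sub {f g : X → V} {v w : V} (hf : PF R x0 f v) (hg : PF R x0 g w) :
    PF R x0 (fun x => f x - g x) (v - w) :=
  ⟨Submodule.sub_mem _ hf.1 hg.1, by simp [hf.2, hg.2]⟩

theorem PF.smul {a : X → K} (ha : a ∈ R) (v : V) : PF R x0 (fun x => a x • v) (a x0 • v) :=
  ⟨Submodule.subset_span ⟨a, ha, v, rfl⟩, rfl⟩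

theorem PF.const (v : V) : PF R x0 (fun _ => v) v := by
  simpa using PF.smul (x0 := x0) (R.one_mem) v

theorem PF.sum {ι : Type} (s : Finset ι) {f : ι → X → V} {v : ι → V}
    (h : ∀ i ∈ s, PF R x0 (f i) (v i)) : PF R x0 (fun x => ∑ i ∈ s, f i x) (∑ i ∈ s, v i) := by
  classical
  induction s using Finset.induction_on with
  | empty => simpa using PF.zero
  | insert a s ha ih =>
    simp only [Finset.sum_insert ha]
    exact (h a (by simp)).add (ih fun i hi => h i (by simp [hi]))

theorem famSub_map (L : V →ₗ[K] W) {f : X → V} (hf : f ∈ famSub R V) :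
    (fun x => L (f x)) ∈ famSub R W := by
  unfold famSub at hf
  induction hf using Submodule.span_induction with
  | mem f hf =>
    obtain ⟨a, ha, v, rfl⟩ := hf
    exact Submodule.subset_span ⟨a, ha, L v, by simp⟩
  | zero =>
    convert (famSub R W).zero_mem using 1
    ext x
    simp
  | add f g _ _ hf hg =>
    convert (famSub R W).add_mem hf hg using 1
    ext x
    simp
  | smul c f _ hf =>
    convert (famSub R W).smul_mem c hf using 1
    ext x
    simp

theorem PF.map (L : V →ₗ[K] W) {f : X → V} {v : V} (hf : PF R x0 f v) :
    PF R x0 (fun x => L (f x)) (L v) :=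
  ⟨famSub_map L hf.1, by simp [hf.2]⟩

theorem PF.smul' {a : X → K} (ha : a ∈ R) {f : X → V} {v : V} (hf : PF R x0 f v) :
    PF R x0 (fun x => a x • f x) (a x0 • v) := by
  refine ⟨?_, by simp [hf.2]⟩
  replace hf := hf.1
  unfold famSub at hf
  induction hf using Submodule.span_induction with
  | mem f hf =>
    obtain ⟨b, hb, v, rfl⟩ := hf
    exact Submodule.subset_span ⟨a * b, R.mul_mem ha hb, v, by simp [mul_smul]⟩
  | zero =>
    convert (famSub R V).zero_mem using 1
    ext x
    simp
  | add f g _ _ hf hg =>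
    convert (famSub R V).add_mem hf hg using 1
    ext x
    simp
  | smul c f _ hf =>
    have := (famSub R V).smul_mem c hf
    convert this using 1
    ext x
    simp [smul_comm c]

theorem famSub_scalar {f : X → K} (hf : f ∈ famSub R K) : f ∈ R := by
  unfold famSub at hf
  induction hf using Submodule.span_induction with
  | mem f hf =>
    obtain ⟨a, ha, v, rfl⟩ := hf
    have := R.smul_mem ha v
    convert this using 1
    ext x
    simp [mul_comm]
  | zero => exact R.zero_mem
  | add f g _ _ hf hg => exact R.add_mem hf hg
  | smul c f _ hf => exact R.smul_mem hf c

/-- Lower semicontinuity of rank. -/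
theorem semicont {f : X → V →ₗ[K] W} {f0 : V →ₗ[K] W} {G : Submodule K V}
    [FiniteDimensional K G] (h : ∀ y ∈ G, PF R x0 (fun x => f x y) (f0 y)) :
    ∃ a ∈ R, a x0 ≠ 0 ∧ ∀ x, a x ≠ 0 →
      Module.finrank K (G.map f0) ≤ Module.finrank K (G.map (f x)) := by
  classical
  set r := Module.finrank K (G.map f0) with hr
  let b := Module.finBasis K (G.map f0)
  have hb : ∀ k : Fin r, ∃ y ∈ G, f0 y = b k := fun k => (b k).2
  choose y hyG hy using hb
  have hli : LinearIndependent K (fun k : Fin r => f0 (y k)) := by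
    have := b.linearIndependent.map' (G.map f0).subtype (Submodule.ker_subtype _)
    have he : (fun k : Fin r => f0 (y k)) = (G.map f0).subtype ∘ b := by
      ext k
      simp [hy]
    rw [he]
    exact this
  obtain ⟨L, hL⟩ := LinearMap.exists_leftInverse_of_injective
    (Fintype.linearCombination K (fun k : Fin r => f0 (y k)))
    (by
      rw [LinearMap.ker_eq_bot]
      exact hli.fintypeLinearCombination_injective)
  have hLk : ∀ k l, L (f0 (y l)) k = if l = k then 1 else 0 := by
    intro k l
    have := LinearMap.congr_fun hL (Pi.single l 1)
    simp only [LinearMap.comp_apply, Fintype.linearCombination_apply_single, one_smul,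
      LinearMap.id_apply] at this
    rw [this, Pi.single_apply]
    simp [eq_comm]
  have hent : ∀ l k, (fun x => L (f x (y l)) k) ∈ R := fun l k =>
    famSub_scalar (famSub_map ((LinearMap.proj k).comp L) (h _ (hyG l)).1)
  let D : Matrix (Fin r) (Fin r) R := fun l k => ⟨_, hent l k⟩
  have hdet : ∀ x, (D.det : X → K) x =
      (Matrix.of fun l k => L (f x (y l)) k : Matrix (Fin r) (Fin r) K).det := by
    intro x
    have := RingHom.map_det ((Pi.evalRingHom (fun _ : X => K) x).comp R.val.toRingHom) D
    exact this
  refine ⟨D.det, D.det.2, ?_, ?_⟩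
  · rw [hdet]
    have : (Matrix.of fun l k => L (f x0 (y l)) k : Matrix (Fin r) (Fin r) K) = 1 := by
      ext l k
      have h2 : f x0 (y l) = f0 (y l) := (h _ (hyG l)).2
      rw [Matrix.of_apply, h2, hLk, Matrix.one_apply]
    rw [this]
    simp
  · intro x hx
    rw [hdet] at hx
    have h1 : LinearIndependent K (fun l => f x (y l)) := by
      refine LinearIndependent.of_comp L ?_
      exact Matrix.linearIndependent_rows_of_det_ne_zero hx
    have h2 : LinearIndependent K
        (fun l => (⟨f x (y l), ⟨y l, hyG l, rfl⟩⟩ : G.map (f x))) :=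
      LinearIndependent.of_comp (G.map (f x)).subtype h1
    simpa using h2.fintype_card_le_finrank

theorem stepB_PF {GM : ℤ → Submodule K M} {GB : ℤ → Submodule K B}
    (hM : ∀ d < 0, GM d = ⊥) (hB : ∀ d < 0, GB d = ⊥) {D : ℤ}
    {μ : X → PS K n →ₗ[K] M →ₗ[K] M} {μ0 : PS K n →ₗ[K] M →ₗ[K] M}
    {c : X → PS K n ⊗[K] B →ₗ[K] B} {c0 : PS K n ⊗[K] B →ₗ[K] B}
    (hμ : ∀ a p, a + p ≤ D → ∀ s ∈ polyGrade K n a, ∀ m ∈ GM p,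
      PF R x0 (fun x => μ x s m) (μ0 s m))
    (hc : ∀ d ≤ D, ∀ y ∈ tensorGrade K (polyGrade K n) GB d, PF R x0 (fun x => c x y) (c0 y))
    (d : ℤ) (hd : d ≤ D) (z : M ⊗[K] (PS K n ⊗[K] B))
    (hz : z ∈ tensorGrade K GM (tensorGrade K (polyGrade K n) GB) d) :
    PF R x0 (fun x => stepB (μ x) (c x) z) (stepB μ0 c0 z) := by
  refine tensorGrade_induction (P := fun z => PF R x0 (fun x => stepB (μ x) (c x) z)
    (stepB μ0 c0 z)) (by simpa using PF.zero)
    (fun x y hx hy => by simpa only [map_add] using hx.add hy) ?_ hz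
  intro p m hm y hy
  refine tensorGrade_induction (P := fun y => PF R x0 (fun x => stepB (μ x) (c x) (m ⊗ₜ y))
    (stepB μ0 c0 (m ⊗ₜ y))) (by simpa using PF.zero)
    (fun x y hx hy => by simpa only [tmul_add, map_add] using hx.add hy) ?_ hy
  intro a s hs t ht
  simp only [stepB_tmul]
  rcases lt_or_ge p 0 with hp | hp
  · rw [hM p hp, Submodule.mem_bot] at hm
    simpa [hm] using PF.zero
  rcases lt_or_ge (d - p - a) 0 with hq | hq
  · rw [hB _ hq, Submodule.mem_bot] at ht
    simpa [ht] using PF.zero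
  refine PF.sub ?_ ?_
  · exact PF.map ((TensorProduct.mk K M B).flip t) (hμ a p (by omega) s hs m hm)
  · exact PF.map ((TensorProduct.mk K M B) m)
      (hc (d - p) (by omega) _ (tmul_mem_tensorGrade hs ht (by ring)))

theorem polyGrade_neg : ∀ d < 0, polyGrade K n d = ⊥ := by
  intro d hd
  rw [polyGrade, if_neg (by omega)]

theorem tensorGrade_neg {GM : ℤ → Submodule K M} {GB : ℤ → Submodule K B}
    (hM : ∀ d < 0, GM d = ⊥) (hB : ∀ d < 0, GB d = ⊥) :
    ∀ d < 0, tensorGrade K GM GB d = ⊥ := by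
  intro d hd
  rw [eq_bot_iff]
  refine tensorGrade_le fun p a ha b hb => ?_
  rcases lt_or_ge p 0 with hp | hp
  · rw [hM p hp, Submodule.mem_bot] at ha
    simp [ha]
  · rw [hB (d - p) (by omega), Submodule.mem_bot] at hb
    simp [hb]

theorem barDGrade_neg {GN : ℤ → Submodule K N} (hN : ∀ d < 0, GN d = ⊥) (i : ℕ) :
    ∀ d < 0, barDGrade K n N GN i d = ⊥ := by
  induction i with
  | zero => exact hN
  | succ i ih => exact tensorGrade_neg polyGrade_neg ih

theorem bC_PF {GN : ℤ → Submodule K N} (hN : ∀ d < 0, GN d = ⊥) {D : ℤ}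
    {ν : X → PS K n →ₗ[K] N →ₗ[K] N} {ν0 : PS K n →ₗ[K] N →ₗ[K] N}
    (hν : ∀ a p, a + p ≤ D → ∀ s ∈ polyGrade K n a, ∀ m ∈ GN p,
      PF R x0 (fun x => ν x s m) (ν0 s m)) (i : ℕ) :
    ∀ d ≤ D, ∀ y ∈ barDGrade K n N GN (i + 1) d,
      PF R x0 (fun x => bC (ν x) i y) (bC ν0 i y) := by
  induction i with
  | zero =>
    intro d hd y hy
    refine tensorGrade_induction (P := fun y => PF R x0 (fun x => TensorProduct.lift (ν x) y)
      (TensorProduct.lift ν0 y)) (by simpa using PF.zero)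
      (fun x y hx hy => by simpa only [map_add] using hx.add hy) ?_ hy
    intro p s hs m hm
    simpa using hν p (d - p) (by omega) s hs m hm
  | succ i ih =>
    exact stepB_PF polyGrade_neg (barDGrade_neg hN i) (fun a p _ s _ m _ => PF.const _) ih

theorem rk_semicont {GM : ℤ → Submodule K M} {GN : ℤ → Submodule K N}
    (hM : ∀ d < 0, GM d = ⊥) (hN : ∀ d < 0, GN d = ⊥) {j : ℤ}
    {μ : X → PS K n →ₗ[K] M →ₗ[K] M} {μ0 : PS K n →ₗ[K] M →ₗ[K] M}
    {ν : X → PS K n →ₗ[K] N →ₗ[K] N} {ν0 : PS K n →ₗ[K] N →ₗ[K] N}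
    (hμ : ∀ a p, a + p ≤ j → ∀ s ∈ polyGrade K n a, ∀ m ∈ GM p,
      PF R x0 (fun x => μ x s m) (μ0 s m))
    (hν : ∀ a p, a + p ≤ j → ∀ s ∈ polyGrade K n a, ∀ m ∈ GN p,
      PF R x0 (fun x => ν x s m) (ν0 s m)) (i : ℕ)
    [FiniteDimensional K (tensorGrade K GM (barDGrade K n N GN (i + 1)) j)] :
    ∃ a ∈ R, a x0 ≠ 0 ∧ ∀ x, a x ≠ 0 → rk GM GN μ0 ν0 i j ≤ rk GM GN (μ x) (ν x) i j := by
  unfold rk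
  refine semicont fun y hy => ?_
  exact stepB_PF hM (barDGrade_neg hN i) hμ (bC_PF hN hν i) j le_rfl y hy

end Families

section Homotopy

variable {K : Type} [Field K] {n : ℕ}
variable {M N B : Type} [AddCommGroup M] [Module K M] [AddCommGroup N] [Module K N]
  [AddCommGroup B] [Module K B]

/-- Projection to the constant term. -/
def cpi (K : Type) [Field K] (n : ℕ) : PS K n →ₗ[K] PS K n :=
  (Algebra.linearMap K (PS K n)).comp (MvPolynomial.lcoeff K 0)

theorem cpi_apply (s : PS K n) : cpi K n s = (MvPolynomial.coeff 0 s) • (1 : PS K n) := by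
  simp [cpi, Algebra.linearMap_apply, MvPolynomial.algebraMap_eq, MvPolynomial.smul_eq_C_mul]

theorem cpi_one : cpi K n 1 = 1 := by simp [cpi_apply]

theorem cpi_cpi (s : PS K n) : cpi K n (cpi K n s) = cpi K n s := by
  simp [cpi_apply]

theorem cpi_mul {u : PS K n} (hu : cpi K n u = 0) (v : PS K n) : cpi K n (u * v) = 0 := by
  rw [cpi_apply] at *
  have : MvPolynomial.coeff 0 u = 0 := by simpa using hu
  simp [← MvPolynomial.constantCoeff_eq] at *
  simp [this]

/-- Step of the homotopy. -/
def hStep (H : B →ₗ[K] PS K n ⊗[K] B) : PS K n ⊗[K] B →ₗ[K] PS K n ⊗[K] (PS K n ⊗[K] B) :=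
  (TensorProduct.mk K (PS K n) (PS K n ⊗[K] B) 1).comp
    (TensorProduct.map (cpi K n) LinearMap.id)
  - TensorProduct.map (LinearMap.id - cpi K n) H

/-- Step of the normalized projection. -/
def pStep (P : B →ₗ[K] B) : PS K n ⊗[K] B →ₗ[K] PS K n ⊗[K] B :=
  TensorProduct.map (LinearMap.id - cpi K n) P

theorem hStep_one (H : B →ₗ[K] PS K n ⊗[K] B) (t : B) :
    hStep H (1 ⊗ₜ t) = 1 ⊗ₜ (1 ⊗ₜ t) := by
  simp [hStep, cpi_one]

theorem hStep_u (H : B →ₗ[K] PS K n ⊗[K] B) {u : PS K n} (hu : cpi K n u = 0) (t : B) :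
    hStep H (u ⊗ₜ t) = - u ⊗ₜ H t := by
  simp [hStep, hu]

theorem pStep_one (P : B →ₗ[K] B) (t : B) :
    pStep (n := n) P (1 ⊗ₜ t) = 0 := by
  simp [pStep, cpi_one]

theorem pStep_u (P : B →ₗ[K] B) {u : PS K n} (hu : cpi K n u = 0) (t : B) :
    pStep P (u ⊗ₜ t) = u ⊗ₜ P t := by
  simp [pStep, hu]

/-- The recursive homotopy identity. -/
def HId (H : B →ₗ[K] PS K n ⊗[K] B) (c : PS K n ⊗[K] B →ₗ[K] B) (P : B →ₗ[K] B) : Prop :=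
  (∀ t, H t + 1 ⊗ₜ c (1 ⊗ₜ t) - H (c (1 ⊗ₜ t)) = 1 ⊗ₜ t) ∧
  ∀ u t, cpi K n u = 0 → stepB (LinearMap.mul K (PS K n)) c (u ⊗ₜ H t) - H (c (u ⊗ₜ t)) =
    u ⊗ₜ t - u ⊗ₜ P t

theorem split_one (s : PS K n) : ∃ (k : K) (u : PS K n), cpi K n u = 0 ∧ s = k • 1 + u :=
  ⟨MvPolynomial.coeff 0 s, s - cpi K n s, by simp [cpi_cpi], by rw [← cpi_apply]; ring⟩

/-- To prove a linear statement on `S ⊗ B`, treat `1 ⊗ t` and `u ⊗ t` separately. -/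
theorem tensor_cases {Q : Submodule K (PS K n ⊗[K] B)} (h1 : ∀ t : B, (1 : PS K n) ⊗ₜ t ∈ Q)
    (hu : ∀ (u : PS K n) (t : B), cpi K n u = 0 → u ⊗ₜ t ∈ Q) (x : PS K n ⊗[K] B) : x ∈ Q := by
  induction x using TensorProduct.induction_on with
  | zero => exact Q.zero_mem
  | add a b ha hb => exact Q.add_mem ha hb
  | tmul s t =>
    obtain ⟨k, u, h, rfl⟩ := split_one s
    rw [add_tmul, ← smul_tmul']
    exact Q.add_mem (Q.smul_mem _ (h1 t)) (hu u t h)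

theorem HId.step {H : B →ₗ[K] PS K n ⊗[K] B} {c : PS K n ⊗[K] B →ₗ[K] B} {P : B →ₗ[K] B}
    (h : HId H c P) :
    HId (hStep H) (stepB (LinearMap.mul K (PS K n)) c) (pStep P) := by
  have hm : ∀ x : PS K n ⊗[K] B, stepB (LinearMap.mul K (PS K n)) c ((1 : PS K n) ⊗ₜ x) =
      x - 1 ⊗ₜ c x := by
    intro x
    induction x using TensorProduct.induction_on with
    | zero => simp
    | add a b ha hb => simp only [tmul_add, map_add, ha, hb]; abel
    | tmul s t => simp
  constructor
  · intro t
    rw [hm, map_sub, hStep_one, tmul_sub]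
    abel
  · intro u t hu
    refine tensor_cases (Q := LinearMap.eqLocus
      ((stepB (LinearMap.mul K (PS K n)) (stepB (LinearMap.mul K (PS K n)) c)).comp
        ((TensorProduct.mk K _ _ u).comp (hStep H)) - (hStep H).comp
        ((stepB (LinearMap.mul K (PS K n)) c).comp (TensorProduct.mk K _ _ u)))
      ((TensorProduct.mk K _ _ u) - (TensorProduct.mk K _ _ u).comp (pStep P))) ?_ ?_ t
    · intro t
      have h1 := congrArg (fun z => u ⊗ₜ[K] z) (h.1 t)
      simp only [tmul_add, tmul_sub] at h1
      simp only [LinearMap.mem_eqLocus, LinearMap.sub_apply, LinearMap.comp_apply,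
        TensorProduct.mk_apply, hStep_one, stepB_tmul, pStep_one, LinearMap.mul_apply', map_sub,
        mul_one, one_mul, hStep_u H hu, tmul_sub, tmul_zero]
      rw [← h1]
      abel
    · intro v t hv
      have h1 := congrArg (fun z => u ⊗ₜ[K] z) (h.2 v t hv)
      simp only [tmul_sub] at h1
      have hs : ∀ x : PS K n ⊗[K] B, stepB (LinearMap.mul K (PS K n))
          (stepB (LinearMap.mul K (PS K n)) c) (u ⊗ₜ (v ⊗ₜ x)) =
          (v * u) ⊗ₜ x - u ⊗ₜ stepB (LinearMap.mul K (PS K n)) c (v ⊗ₜ x) := by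
        intro x
        simp
      simp only [LinearMap.mem_eqLocus, LinearMap.sub_apply, LinearMap.comp_apply,
        TensorProduct.mk_apply, hStep_u H hv, stepB_tmul, pStep_u P hv, LinearMap.mul_apply',
        map_sub, hStep_u H hu, map_neg, hs]
      rw [hStep_u H (by rw [mul_comm]; exact cpi_mul hu v), ← h1]
      abel

/-- The contracting homotopy. -/
def bH (K : Type) [Field K] (n : ℕ) (N : Type) [AddCommGroup N] [Module K N] :
    (i : ℕ) → (barD K n N i →ₗ[K] barD K n N (i + 1))
  | 0 => 0
  | (i + 1) => hStep (B := barD K n N i) (bH K n N i)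

/-- The normalized projection. -/
def bP (K : Type) [Field K] (n : ℕ) (N : Type) [AddCommGroup N] [Module K N] :
    (i : ℕ) → (barD K n N i →ₗ[K] barD K n N i)
  | 0 => LinearMap.id
  | (i + 1) => pStep (B := barD K n N i) (bP K n N i)

theorem bH_id {ν : PS K n →ₗ[K] N →ₗ[K] N} (hν : ∀ x, ν 1 x = x) (i : ℕ) :
    HId (B := barD K n N i) (bH K n N i) (bC ν i) (bP K n N i) := by
  induction i with
  | zero =>
    change HId (B := N) 0 (TensorProduct.lift ν) LinearMap.id
    constructor
    · intro t
      simp [hν]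
    · intro u t _
      simp
  | succ i ih => exact ih.step

theorem hId_full {H : B →ₗ[K] PS K n ⊗[K] B} {c : PS K n ⊗[K] B →ₗ[K] B} {P : B →ₗ[K] B}
    (h : HId H c P) {μ : PS K n →ₗ[K] M →ₗ[K] M} (hμ : ∀ x, μ 1 x = x)
    (x : M ⊗[K] (PS K n ⊗[K] B)) :
    stepB μ (stepB (LinearMap.mul K (PS K n)) c) (TensorProduct.map LinearMap.id (hStep H) x) +
      TensorProduct.map LinearMap.id H (stepB μ c x) =
      x - TensorProduct.map LinearMap.id (pStep P) x := by
  induction x using TensorProduct.induction_on with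
  | zero => simp
  | add a b ha hb =>
    simp only [map_add]
    rw [add_sub_add_comm, ← ha, ← hb]
    abel
  | tmul m y =>
    have hs : ∀ (v : PS K n) (x : PS K n ⊗[K] B), stepB μ
        (stepB (LinearMap.mul K (PS K n)) c) (m ⊗ₜ (v ⊗ₜ x)) =
        (μ v m) ⊗ₜ x - m ⊗ₜ stepB (LinearMap.mul K (PS K n)) c (v ⊗ₜ x) := by
      intro v x
      simp
    refine tensor_cases (Q := LinearMap.eqLocus
      ((stepB μ (stepB (LinearMap.mul K (PS K n)) c)).comp
        ((TensorProduct.mk K _ _ m).comp (hStep H)) + (TensorProduct.map LinearMap.id H).comp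
        ((stepB μ c).comp (TensorProduct.mk K _ _ m)))
      ((TensorProduct.mk K _ _ m) - (TensorProduct.mk K _ _ m).comp (pStep P))) ?_ ?_ y
    · intro t
      have h1 := congrArg (fun z => m ⊗ₜ[K] z) (h.1 t)
      simp only [tmul_add, tmul_sub] at h1
      simp only [LinearMap.mem_eqLocus, LinearMap.sub_apply, LinearMap.add_apply,
        LinearMap.comp_apply,
        TensorProduct.mk_apply, hStep_one, stepB_tmul, pStep_one, LinearMap.mul_apply', map_sub,
        mul_one, hμ, tmul_sub, tmul_zero, TensorProduct.map_tmul, LinearMap.id_apply]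
      rw [← h1]
      abel
    · intro v t hv
      have h1 := congrArg (fun z => m ⊗ₜ[K] z) (h.2 v t hv)
      simp only [tmul_sub] at h1
      simp only [LinearMap.mem_eqLocus, LinearMap.sub_apply, LinearMap.add_apply,
        LinearMap.comp_apply,
        TensorProduct.mk_apply, hStep_u H hv, stepB_tmul, pStep_u P hv,
        map_sub, map_neg, hs, TensorProduct.map_tmul, LinearMap.id_apply]
      rw [← h1]
      abel

theorem cpi_polyGrade {d : ℤ} (hd : d ≤ 0) {s : PS K n} (hs : s ∈ polyGrade K n d) :
    s - cpi K n s = 0 := by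
  unfold polyGrade at hs
  split_ifs at hs with h
  · have : d.toNat = 0 := by omega
    rw [this, MvPolynomial.mem_homogeneousSubmodule] at hs
    have := (MvPolynomial.totalDegree_zero_iff_isHomogeneous _).2 hs
    rw [MvPolynomial.totalDegree_eq_zero_iff_eq_C] at this
    rw [cpi_apply, MvPolynomial.smul_eq_C_mul, mul_one, ← this, sub_self]
  · simp at hs
    simp [hs]

theorem bP_grade {GN : ℤ → Submodule K N} (hN : ∀ d < 0, GN d = ⊥) (i : ℕ) :
    ∀ d < (i : ℤ), ∀ x ∈ barDGrade K n N GN i d, bP K n N i x = 0 := by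
  induction i with
  | zero =>
    intro d hd x hx
    have hx' : x ∈ GN d := hx
    rw [hN d (by simpa using hd)] at hx'
    exact (Submodule.mem_bot K).1 hx'
  | succ i ih =>
    intro d hd x hx
    refine tensorGrade_induction (P := fun x => pStep (B := barD K n N i) (bP K n N i) x = 0)
      (by simp) (fun x y hx hy => by rw [map_add, hx, hy, add_zero]) ?_ hx
    intro p s hs t ht
    rcases le_or_gt p 0 with hp | hp
    · simp [pStep, cpi_polyGrade hp hs]
    · have := ih (d - p) (by push_cast at hd; omega) t ht
      simp [pStep, this]

theorem bB_exact {GM : ℤ → Submodule K M} {GN : ℤ → Submodule K N}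
    (hM : ∀ d < 0, GM d = ⊥) (hN : ∀ d < 0, GN d = ⊥)
    {μ : PS K n →ₗ[K] M →ₗ[K] M} {ν : PS K n →ₗ[K] N →ₗ[K] N}
    (hμ : ∀ x, μ 1 x = x) (hν : ∀ x, ν 1 x = x) (i : ℕ) (j : ℤ) (hj : j < ((i + 1 : ℕ) : ℤ)) :
    LinearMap.ker (bB μ ν i) ⊓ tensorGrade K GM (barDGrade K n N GN (i + 1)) j ≤
      LinearMap.range (bB μ ν (i + 1)) := by
  rintro x ⟨hx, hxG⟩
  have h := hId_full (bH_id hν i) hμ x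
  have hx' : stepB (B := barD K n N i) μ (bC ν i) x = 0 := hx
  have hP : TensorProduct.map (LinearMap.id : M →ₗ[K] M)
      (pStep (B := barD K n N i) (bP K n N i)) x = 0 := by
    refine tensorGrade_induction (P := fun x => TensorProduct.map (LinearMap.id : M →ₗ[K] M)
      (pStep (B := barD K n N i) (bP K n N i)) x = 0)
      (by simp) (fun x y hx hy => by rw [map_add, hx, hy, add_zero]) ?_ hxG
    intro p m hm t ht
    rcases lt_or_ge p 0 with hp | hp
    · rw [hM p hp, Submodule.mem_bot] at hm
      simp [hm]
    · have : pStep (B := barD K n N i) (bP K n N i) t = 0 :=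
        bP_grade hN (i + 1) (j - p) (by omega) t ht
      rw [TensorProduct.map_tmul]
      exact (congrArg (fun z => m ⊗ₜ[K] z) this).trans (tmul_zero _ _)
  have h2 : stepB (B := barD K n N (i + 1)) μ (bC ν (i + 1))
      (TensorProduct.map LinearMap.id (hStep (B := barD K n N i) (bH K n N i)) x) = x := by
    rw [hx', hP, map_zero, add_zero] at h
    exact h.trans (sub_zero _)
  exact ⟨_, h2⟩

end Homotopy

section Quotients

variable {K : Type} [Field K] {n : ℕ}

theorem mem_polyGrade_nat {d : ℕ} {f : PS K n} :
    f ∈ polyGrade K n (d : ℤ) ↔ f.IsHomogeneous d := by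
  simp [polyGrade, mem_homogeneousSubmodule]

/-- Projection to a degree. -/
def pProj (d : ℤ) : PS K n →ₗ[K] PS K n := if 0 ≤ d then homogeneousComponent d.toNat else 0

theorem pProj_same {d : ℤ} {x : PS K n} (hx : x ∈ polyGrade K n d) : pProj d x = x := by
  unfold polyGrade at hx
  unfold pProj
  by_cases h : 0 ≤ d
  · rw [if_pos h] at hx ⊢
    rw [homogeneousComponent_of_mem hx]; simp
  · rw [if_neg h] at hx ⊢
    simp at hx; simp [hx]

theorem pProj_ne {d e : ℤ} (hde : d ≠ e) {x : PS K n} (hx : x ∈ polyGrade K n e) :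
    pProj d x = 0 := by
  unfold polyGrade at hx
  unfold pProj
  by_cases h : 0 ≤ e
  · rw [if_pos h] at hx
    by_cases h' : 0 ≤ d
    · rw [if_pos h', homogeneousComponent_of_mem hx, if_neg (by omega)]
    · rw [if_neg h']; rfl
  · rw [if_neg h] at hx
    simp at hx; simp [hx]

theorem polyGrade_isGr : IsGr (polyGrade K n) where
  neg := polyGrade_neg
  fin := by
    intro d
    unfold polyGrade
    by_cases h : 0 ≤ d
    · rw [if_pos h]
      exact Module.Finite.iff_fg.2 (homogeneousSubmodule_fg _ _ _)
    · rw [if_neg h]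
      infer_instance
  top := by
    rw [eq_top_iff]
    intro f _
    rw [← sum_homogeneousComponent f]
    refine Submodule.sum_mem _ fun i _ => ?_
    refine Submodule.mem_iSup_of_mem (i : ℤ) ?_
    rw [mem_polyGrade_nat]
    exact homogeneousComponent_isHomogeneous i f
  proj := ⟨pProj, fun _ _ hx => pProj_same hx, fun _ _ h _ hx => pProj_ne h hx⟩

theorem barDGrade_isGr {N : Type} [AddCommGroup N] [Module K N] {GN : ℤ → Submodule K N}
    (hN : IsGr GN) (i : ℕ) : IsGr (barDGrade K n N GN i) := by
  induction i with
  | zero => exact hN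
  | succ i ih => exact IsGr.tensor polyGrade_isGr ih

theorem mk_mem_quotGrade {I : Ideal (PS K n)} {d : ℤ} {f : PS K n} (hf : f ∈ polyGrade K n d) :
    Ideal.Quotient.mk I f ∈ quotGrade K n I d := ⟨f, hf, rfl⟩

theorem mem_quotGrade {I : Ideal (PS K n)} {d : ℤ} {x : PS K n ⧸ I} :
    x ∈ quotGrade K n I d ↔ ∃ f ∈ polyGrade K n d, Ideal.Quotient.mk I f = x := Iff.rfl

theorem quotGrade_isGr {I : Ideal (PS K n)} (hI : IsHomog K n I) : IsGr (quotGrade K n I) where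
  neg := by
    intro d hd
    rw [quotGrade, polyGrade_neg d hd, Submodule.map_bot]
  fin := by
    intro d
    have := (polyGrade_isGr (K := K) (n := n)).fin d
    unfold quotGrade
    infer_instance
  top := by
    unfold quotGrade
    rw [← Submodule.map_iSup, polyGrade_isGr.top, Submodule.map_top, LinearMap.range_eq_top]
    exact Ideal.Quotient.mk_surjective
  proj := by
    obtain ⟨σ, hσ⟩ := LinearMap.exists_rightInverse_of_surjective
      (Ideal.Quotient.mkₐ K I).toLinearMap
      (LinearMap.range_eq_top.2 Ideal.Quotient.mk_surjective)
    have hσ' : ∀ x, Ideal.Quotient.mk I (σ x) = x := fun x => LinearMap.congr_fun hσ x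
    have hq : ∀ d f, f ∈ I → pProj d f ∈ I := by
      intro d f hf
      unfold pProj
      split_ifs
      · exact hI f hf _
      · simp
    have key : ∀ d f, Ideal.Quotient.mk I (pProj d (σ (Ideal.Quotient.mk I f))) =
        Ideal.Quotient.mk I (pProj d f) := by
      intro d f
      rw [Ideal.Quotient.eq, ← map_sub]
      apply hq
      rw [← Ideal.Quotient.eq, hσ']
    refine ⟨fun d => (Ideal.Quotient.mkₐ K I).toLinearMap ∘ₗ pProj d ∘ₗ σ, ?_, ?_⟩
    · rintro d _ ⟨f, hx, rfl⟩
      refine (key d f).trans ?_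
      rw [pProj_same hx]
      rfl
    · rintro d e hde _ ⟨f, hx, rfl⟩
      refine (key d f).trans ?_
      rw [pProj_ne hde hx, map_zero]

/-- The standard action on a quotient. -/
abbrev act (I : Ideal (PS K n)) : PS K n →ₗ[K] (PS K n ⧸ I) →ₗ[K] (PS K n ⧸ I) :=
  smulBilin K n (PS K n ⧸ I)

theorem act_mk (I : Ideal (PS K n)) (s f : PS K n) :
    act I s (Ideal.Quotient.mk I f) = Ideal.Quotient.mk I (s * f) := rfl

theorem act_one (I : Ideal (PS K n)) (x : PS K n ⧸ I) : act I 1 x = x := one_smul _ x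

theorem act_homAct (I : Ideal (PS K n)) : HomAct (quotGrade K n I) (act I) := by
  rintro a p s hs _ ⟨f, hf, rfl⟩
  exact mk_mem_quotGrade (mul_homAct a p s hs f hf)

/-- rank of the standard bar differential -/
def rkQ (I J : Ideal (PS K n)) (i : ℕ) (j : ℤ) : ℕ :=
  rk (quotGrade K n I) (quotGrade K n J) (act I) (act J) i j

/-- dimension of the standard bar complex -/
def cdQ (I J : Ideal (PS K n)) (i : ℕ) (j : ℤ) : ℕ :=
  cdim n (quotGrade K n I) (quotGrade K n J) i j

theorem strand_fin {I J : Ideal (PS K n)} (hI : IsHomog K n I) (hJ : IsHomog K n J) (i : ℕ)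
    (j : ℤ) : FiniteDimensional K (tensorGrade K (quotGrade K n I)
      (barDGrade K n (PS K n ⧸ J) (quotGrade K n J) i) j) :=
  (IsGr.tensor (quotGrade_isGr hI) (barDGrade_isGr (quotGrade_isGr hJ) i)).fin j

theorem rkQ_range {I J : Ideal (PS K n)} (hI : IsHomog K n I) (hJ : IsHomog K n J) (i : ℕ)
    (j : ℤ) : LinearMap.range (barB K n (PS K n ⧸ J) (PS K n ⧸ I) i) ⊓
      tensorGrade K (quotGrade K n I) (barDGrade K n (PS K n ⧸ J) (quotGrade K n J) i) j
      = (tensorGrade K (quotGrade K n I)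
        (barDGrade K n (PS K n ⧸ J) (quotGrade K n J) (i + 1)) j).map (bB (act I) (act J) i) := by
  rw [barB_eq]
  exact range_inf_eq
    (IsGr.tensor (quotGrade_isGr hI) (barDGrade_isGr (quotGrade_isGr hJ) (i + 1)))
    (IsGr.tensor (quotGrade_isGr hI) (barDGrade_isGr (quotGrade_isGr hJ) i)) _
    (bB_grade (act_homAct I) (act_homAct J) i) j

theorem torQQ_zero {I J : Ideal (PS K n)} (hI : IsHomog K n I) (hJ : IsHomog K n J) (j : ℤ) :
    torQQ K n I J 0 j = cdQ I J 0 j - rkQ I J 0 j := by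
  simp only [torQQ, torStrandDim]
  rw [rkQ_range hI hJ]
  rfl

theorem torQQ_succ {I J : Ideal (PS K n)} (hI : IsHomog K n I) (hJ : IsHomog K n J) (i : ℕ)
    (j : ℤ) :
    torQQ K n I J (i + 1) j = cdQ I J (i + 1) j - rkQ I J i j - rkQ I J (i + 1) j := by
  have := strand_fin hI hJ (i + 1) j
  simp only [torQQ, torStrandDim]
  rw [rkQ_range hI hJ, barB_eq, finrank_ker_inf]
  rfl

theorem torQQ_vanish {I J : Ideal (PS K n)} (hI : IsHomog K n I) (hJ : IsHomog K n J) (i : ℕ)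
    (j : ℤ) (hj : j < (i : ℤ)) : torQQ K n I J i j = 0 := by
  cases i with
  | zero =>
    rw [torQQ_zero hI hJ, cdQ, cdim, tensorGrade_neg (quotGrade_isGr hI).neg
      (barDGrade_neg (quotGrade_isGr hJ).neg 0) j (by simpa using hj)]
    simp
  | succ i =>
    have := strand_fin hI hJ (i + 1) j
    simp only [torQQ, torStrandDim]
    rw [Nat.sub_eq_zero_iff_le]
    apply Submodule.finrank_mono
    refine le_inf ?_ inf_le_right
    rw [barB_eq, barB_eq]
    exact bB_exact (quotGrade_isGr hI).neg (quotGrade_isGr hJ).neg (act_one I) (act_one J) i j hj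

end Quotients

section Coord

variable {K : Type} [Field K] {n : ℕ}

theorem cc_X (g : GL (Fin n) K) (i : Fin n) : coordChange K n g (X i) =
    ∑ j, ((g : Matrix (Fin n) (Fin n) K) j i) • (X j : PS K n) := by
  simp [coordChange]

theorem cc_mul (g h : GL (Fin n) K) :
    coordChange K n (g * h) = (coordChange K n g).comp (coordChange K n h) := by
  apply MvPolynomial.algHom_ext
  intro i
  simp only [AlgHom.comp_apply, cc_X, map_sum, map_smul, Finset.smul_sum, smul_smul]
  rw [Finset.sum_comm]
  refine Finset.sum_congr rfl fun k _ => ?_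
  rw [← Finset.sum_smul]
  congr 1
  simp [Matrix.mul_apply, mul_comm]

theorem cc_mul_apply (g h : GL (Fin n) K) (f : PS K n) :
    coordChange K n (g * h) f = coordChange K n g (coordChange K n h f) := by
  rw [cc_mul]; rfl

theorem cc_one : coordChange K n (1 : GL (Fin n) K) = AlgHom.id K _ := by
  apply MvPolynomial.algHom_ext
  intro i
  simp [cc_X, Matrix.one_apply]

/-- Coordinate change as an equivalence. -/
def ccE (g : GL (Fin n) K) : PS K n ≃ₐ[K] PS K n :=
  AlgEquiv.ofAlgHom (coordChange K n g) (coordChange K n g⁻¹)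
    (by rw [← cc_mul, mul_inv_cancel, cc_one]) (by rw [← cc_mul, inv_mul_cancel, cc_one])

theorem ccE_apply (g : GL (Fin n) K) (f : PS K n) : ccE g f = coordChange K n g f := rfl

theorem ccE_inv (g : GL (Fin n) K) (f : PS K n) :
    coordChange K n g⁻¹ (coordChange K n g f) = f := (ccE g).symm_apply_apply f

theorem cc_grade (g : GL (Fin n) K) {d : ℤ} {f : PS K n} (hf : f ∈ polyGrade K n d) :
    coordChange K n g f ∈ polyGrade K n d := by
  unfold polyGrade at *
  split_ifs at * with h
  · rw [mem_homogeneousSubmodule] at *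
    have := MvPolynomial.IsHomogeneous.aeval hf (n := 1)
      (fun i => ∑ j, ((g : Matrix (Fin n) (Fin n) K) j i) • (X j : PS K n)) (fun i =>
        IsHomogeneous.sum _ _ _ fun j _ => by
          rw [smul_eq_C_mul]
          simpa using (isHomogeneous_C (Fin n) _).mul (isHomogeneous_X K j))
    simpa [coordChange] using this
  · simp at hf; simp [hf]

theorem ccE_grEq (g : GL (Fin n) K) :
    GrEq (polyGrade K n) (polyGrade K n) (ccE g).toLinearEquiv := by
  intro p
  apply le_antisymm
  · rintro _ ⟨f, hf, rfl⟩
    exact cc_grade g hf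
  · intro f hf
    exact ⟨coordChange K n g⁻¹ f, cc_grade _ hf, (ccE g).apply_symm_apply f⟩

theorem homogeneousComponent_cc (g : GL (Fin n) K) (d : ℕ) (f : PS K n) :
    homogeneousComponent d (coordChange K n g f) =
      coordChange K n g (homogeneousComponent d f) := by
  conv_lhs => rw [← sum_homogeneousComponent f]
  have h1 : ∀ i, coordChange K n g (homogeneousComponent i f) ∈ homogeneousSubmodule (Fin n) K i :=
    fun i => by
      have := cc_grade g (mem_polyGrade_nat.2 (homogeneousComponent_isHomogeneous i f))
      exact mem_polyGrade_nat.1 this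
  rw [map_sum, map_sum, Finset.sum_congr rfl fun i _ => homogeneousComponent_of_mem (h1 i)]
  rw [Finset.sum_ite_eq]
  split_ifs with h
  · rfl
  · rw [homogeneousComponent_eq_zero, map_zero]
    simpa using h

theorem map_isHomog (g : GL (Fin n) K) {J : Ideal (PS K n)} (hJ : IsHomog K n J) :
    IsHomog K n (J.map (coordChange K n g)) := by
  intro f hf d
  obtain ⟨f, hf', rfl⟩ := (Ideal.mem_map_iff_of_surjective _ (ccE g).surjective).1 hf
  change homogeneousComponent d (coordChange K n g f) ∈ _
  rw [homogeneousComponent_cc]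
  exact Ideal.mem_map_of_mem _ (hJ f hf' d)

/-- The induced equivalence of quotients. -/
def qE (g : GL (Fin n) K) (J : Ideal (PS K n)) :
    (PS K n ⧸ J) ≃ₗ[K] (PS K n ⧸ J.map (coordChange K n g)) :=
  (Ideal.quotientEquivAlg J (J.map (coordChange K n g)) (ccE g) rfl).toLinearEquiv

theorem qE_mk (g : GL (Fin n) K) (J : Ideal (PS K n)) (f : PS K n) :
    qE g J (Ideal.Quotient.mk J f) = Ideal.Quotient.mk _ (coordChange K n g f) := rfl

theorem qE_grEq (g : GL (Fin n) K) (J : Ideal (PS K n)) :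
    GrEq (quotGrade K n J) (quotGrade K n (J.map (coordChange K n g))) (qE g J) := by
  intro p
  apply le_antisymm
  · rintro _ ⟨_, ⟨f, hf, rfl⟩, rfl⟩
    exact mk_mem_quotGrade (cc_grade g hf)
  · rintro _ ⟨f, hf, rfl⟩
    refine ⟨Ideal.Quotient.mk _ (coordChange K n g⁻¹ f), mk_mem_quotGrade (cc_grade _ hf), ?_⟩
    exact congrArg (Ideal.Quotient.mk _) ((ccE g).apply_symm_apply f)

theorem qE_act (g : GL (Fin n) K) (J : Ideal (PS K n)) (s : PS K n) (x : PS K n ⧸ J) :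
    qE g J (act J s x) = act _ (coordChange K n g s) (qE g J x) := by
  obtain ⟨f, rfl⟩ := Ideal.Quotient.mk_surjective x
  rw [act_mk, qE_mk, qE_mk, act_mk, map_mul]

theorem GrEq.trans {M M' M'' : Type} [AddCommGroup M] [Module K M] [AddCommGroup M'] [Module K M']
    [AddCommGroup M''] [Module K M''] {G : ℤ → Submodule K M} {G' : ℤ → Submodule K M'}
    {G'' : ℤ → Submodule K M''} {φ : M ≃ₗ[K] M'} {ψ : M' ≃ₗ[K] M''} (h : GrEq G G' φ)
    (h' : GrEq G' G'' ψ) : GrEq G G'' (φ.trans ψ) := by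
  intro p
  rw [← h' p, ← h p, ← Submodule.map_comp]
  rfl

theorem GrEq.symm {M M' : Type} [AddCommGroup M] [Module K M] [AddCommGroup M'] [Module K M']
    {G : ℤ → Submodule K M} {G' : ℤ → Submodule K M'}
    {φ : M ≃ₗ[K] M'} (h : GrEq G G' φ) : GrEq G' G φ.symm := by
  intro p
  rw [← h p, ← Submodule.map_comp]
  simp

theorem GrEq.refl {M : Type} [AddCommGroup M] [Module K M] (G : ℤ → Submodule K M) :
    GrEq G G (LinearEquiv.refl K M) := fun p => by simp

end Coord

section Orders

variable {n : ℕ}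

/-- Weighted degree of an exponent. -/
def wd (w : Fin n → ℕ) (a : Fin n →₀ ℕ) : ℕ := ∑ i, w i * a i

theorem wd_add (w : Fin n → ℕ) (a b : Fin n →₀ ℕ) : wd w (a + b) = wd w a + wd w b := by
  simp [wd, mul_add, Finset.sum_add_distrib]

theorem expDeg_add (a b : Fin n →₀ ℕ) : expDeg n (a + b) = expDeg n a + expDeg n b := by
  simp [expDeg, Finset.sum_add_distrib]

/-- The properties of a monomial order that we need. -/
structure MOrd (r : (Fin n →₀ ℕ) → (Fin n →₀ ℕ) → Prop) : Prop where
  tot : ∀ a b, r a b ∨ a = b ∨ r b a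
  trans : ∀ a b c, r a b → r b c → r a c
  add : ∀ a b c, r a b → r (c + a) (c + b)
  wt : ∀ D : ℕ, ∃ w : Fin n → ℕ, ∀ a b, expDeg n a ≤ D → r a b → wd w a < wd w b

theorem lex_wt (s : Fin n → Fin n → Prop) (hs : ∀ k l, s l k ∨ l = k ∨ s k l) (D : ℕ)
    (w : Fin n → ℕ) (hpos : ∀ k, 0 < w k) (hw : ∀ k l, s k l → (D + 1) * w l ≤ w k)
    (a b : Fin n →₀ ℕ) (ha : expDeg n a ≤ D) (h : Finsupp.Lex s (· < ·) a b) :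
    wd w a < wd w b := by
  obtain ⟨k, hk1, hk2⟩ := Finsupp.lex_def.1 h
  have key : ∀ l, (D + 1) * (w l * a l) + (if l = k then (D + 1) * w k else 0) ≤
      (D + 1) * (w l * b l) + w k * a l := by
    intro l
    rcases hs k l with h | h | h
    · rw [hk1 l h]
      split_ifs with hh
      · subst hh; exact absurd (hk1 l h) hk2.ne
      · simp
    · subst h
      rw [if_pos rfl]
      have : w l * (a l + 1) ≤ w l * b l := Nat.mul_le_mul_left _ hk2
      nlinarith
    · split_ifs with hh
      · subst hh
        have : w l * (a l + 1) ≤ w l * b l := Nat.mul_le_mul_left _ hk2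
        nlinarith
      · have := Nat.mul_le_mul_right (a l) (hw k l h)
        rw [mul_assoc] at this
        have h0 := Nat.zero_le ((D + 1) * (w l * b l))
        linarith
  have hsum := Finset.sum_le_sum (s := Finset.univ) fun l _ => key l
  rw [Finset.sum_add_distrib, Finset.sum_add_distrib, Finset.sum_ite_eq' Finset.univ k,
    if_pos (Finset.mem_univ k), ← Finset.mul_sum, ← Finset.mul_sum, ← Finset.mul_sum] at hsum
  change (D + 1) * wd w a + (D + 1) * w k ≤ (D + 1) * wd w b + w k * expDeg n a at hsum
  have h2 := Nat.mul_le_mul_left (w k) ha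
  have h3 := hpos k
  by_contra hcon
  push Not at hcon
  have := Nat.mul_le_mul_left (D + 1) hcon
  nlinarith

theorem lex_add (s : Fin n → Fin n → Prop) (a b c : Fin n →₀ ℕ)
    (h : Finsupp.Lex s (· < ·) a b) : Finsupp.Lex s (· < ·) (c + a) (c + b) := by
  obtain ⟨k, hk1, hk2⟩ := Finsupp.lex_def.1 h
  refine Finsupp.lex_def.2 ⟨k, fun d hd => ?_, ?_⟩
  · simp [hk1 d hd]
  · simpa using hk2

theorem lexLt_mOrd : MOrd (lexLt n) where
  tot a b := by
    rcases lt_trichotomy (toLex a) (toLex b) with h | h | h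
    · exact Or.inl h
    · exact Or.inr (Or.inl (toLex.injective h))
    · exact Or.inr (Or.inr h)
  trans a b c h h' := by
    have h1 : toLex a < toLex b := h
    have h2 : toLex b < toLex c := h'
    exact h1.trans h2
  add a b c h := lex_add _ a b c h
  wt D := by
    refine ⟨fun k => (D + 1) ^ (n - (k : ℕ)), fun a b hab h => lex_wt (· < ·)
      (fun k l => lt_trichotomy l k) D _ (fun k => by positivity) ?_ a b hab h⟩
    intro k l hkl
    rw [← pow_succ']
    apply Nat.pow_le_pow_right (by omega)
    have := l.2
    have : (k : ℕ) < l := hkl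
    omega

theorem oplexLt_mOrd : MOrd (oplexLt n) where
  tot a b := by
    rcases lt_trichotomy (toColex a) (toColex b) with h | h | h
    · exact Or.inl h
    · exact Or.inr (Or.inl (toColex.injective h))
    · exact Or.inr (Or.inr h)
  trans a b c h h' := by
    have h1 : toColex a < toColex b := h
    have h2 : toColex b < toColex c := h'
    exact h1.trans h2
  add a b c h := lex_add _ a b c h
  wt D := by
    refine ⟨fun k => (D + 1) ^ (k : ℕ), fun a b hab h => lex_wt (· > ·)
      (fun k l => by have := lt_trichotomy k l; tauto) D _ (fun k => by positivity) ?_ a b hab h⟩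
    intro k l hkl
    rw [← pow_succ']
    apply Nat.pow_le_pow_right (by omega)
    have : (l : ℕ) < k := hkl
    omega

end Orders

section Initial

variable {K : Type} [Field K] {n : ℕ} {r : (Fin n →₀ ℕ) → (Fin n →₀ ℕ) → Prop}

theorem expDeg_eq (m : Fin n →₀ ℕ) : expDeg n m = m.degree := by
  rw [Finsupp.degree_eq_sum]; rfl

/-- Leading exponents of an ideal. -/
def lmSet (r : (Fin n →₀ ℕ) → (Fin n →₀ ℕ) → Prop) (I : Ideal (PS K n)) : Set (Fin n →₀ ℕ) :=
  {m | ∃ f ∈ I, m ∈ f.support ∧ ∀ m' ∈ f.support, m' = m ∨ r m' m}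

theorem initial_eq (I : Ideal (PS K n)) : initialIdealO K n r I =
    Ideal.span ((fun s => monomial s (1 : K)) '' lmSet r I) := by
  unfold initialIdealO
  congr 1
  ext g
  constructor
  · rintro ⟨f, hf, m, hm, h, rfl⟩
    exact ⟨m, ⟨f, hf, hm, h⟩, rfl⟩
  · rintro ⟨m, ⟨f, hf, hm, h⟩, rfl⟩
    exact ⟨f, hf, m, hm, h, rfl⟩

theorem mem_initial {I : Ideal (PS K n)} {f : PS K n} : f ∈ initialIdealO K n r I ↔
    ∀ m ∈ f.support, ∃ m0 ∈ lmSet r I, m0 ≤ m := by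
  rw [initial_eq, mem_ideal_span_monomial_image]

theorem monomial_mem_initial {I : Ideal (PS K n)} {m : Fin n →₀ ℕ} :
    monomial m (1 : K) ∈ initialIdealO K n r I ↔ ∃ m0 ∈ lmSet r I, m0 ≤ m := by
  classical
  rw [mem_initial, support_monomial]
  simp

theorem initial_isHomog (I : Ideal (PS K n)) : IsHomog K n (initialIdealO K n r I) := by
  intro f hf d
  rw [mem_initial] at *
  intro m hm
  apply hf
  rw [mem_support_iff, coeff_homogeneousComponent] at hm
  rw [mem_support_iff]
  split_ifs at hm with h
  · exact hm
  · exact absurd rfl hm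

theorem isHom_iff {f : PS K n} {d : ℕ} :
    f.IsHomogeneous d ↔ ∀ m ∈ f.support, expDeg n m = d := by
  constructor
  · intro h m hm
    rw [expDeg_eq]
    exact IsHomogeneous.degree_eq_sum_deg_support h hm |>.symm
  · intro h m hm
    have := h m (mem_support_iff.2 hm)
    rw [expDeg_eq] at this
    rw [Finsupp.degree_eq_weight_one] at this
    exact this

/-- Nonzero elements of a homogeneous ideal involve a monomial in the initial ideal. -/
theorem exists_lm (hr : MOrd r) {I : Ideal (PS K n)} (hI : IsHomog K n I) {f : PS K n}
    (hf : f ∈ I) (h0 : f ≠ 0) : ∃ m ∈ f.support, monomial m (1 : K) ∈ initialIdealO K n r I := by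
  obtain ⟨m1, hm1⟩ := support_nonempty.2 h0
  set d := expDeg n m1 with hd
  set g := homogeneousComponent d f with hg
  have hgI : g ∈ I := hI f hf d
  have hsub : ∀ m ∈ g.support, m ∈ f.support ∧ expDeg n m = d := by
    intro m hm
    rw [mem_support_iff, hg, coeff_homogeneousComponent] at hm
    split_ifs at hm with h
    · exact ⟨mem_support_iff.2 hm, by rw [expDeg_eq]; exact h⟩
    · exact absurd rfl hm
  have hne : g.support.Nonempty := by
    refine ⟨m1, ?_⟩
    rw [mem_support_iff, hg, coeff_homogeneousComponent, if_pos (by rw [hd, expDeg_eq])]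
    exact mem_support_iff.1 hm1
  obtain ⟨w, hw⟩ := hr.wt d
  obtain ⟨m, hm, hmax⟩ := Finset.exists_max_image g.support (wd w) hne
  refine ⟨m, (hsub m hm).1, monomial_mem_initial.2 ⟨m, ⟨g, hgI, hm, fun m' hm' => ?_⟩, le_rfl⟩⟩
  rcases hr.tot m' m with h | h | h
  · exact Or.inr h
  · exact Or.inl h
  · have := hw m m' (hsub m hm).2.le h
    have := hmax m' hm'
    omega

/-- One reduction step. -/
theorem red_step (hr : MOrd r) {I : Ideal (PS K n)} (hI : IsHomog K n I) {u : Fin n →₀ ℕ}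
    (hu : monomial u (1 : K) ∈ initialIdealO K n r I) :
    ∃ h : PS K n, monomial u 1 - h ∈ I ∧ ∀ m ∈ h.support, r m u ∧ expDeg n m = expDeg n u := by
  classical
  obtain ⟨m0, ⟨f, hf, hm0, hmax⟩, hle⟩ := monomial_mem_initial.1 hu
  obtain ⟨v, rfl⟩ := exists_add_of_le hle
  set g := homogeneousComponent (expDeg n m0) f with hg
  have hgI : g ∈ I := hI f hf _
  have hc0 : coeff m0 g = coeff m0 f := by
    rw [hg, coeff_homogeneousComponent, if_pos (by rw [expDeg_eq])]
  have hcne : coeff m0 f ≠ 0 := mem_support_iff.1 hm0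
  set F : PS K n := monomial v (coeff m0 f)⁻¹ * g with hF
  refine ⟨monomial (m0 + v) 1 - F, ?_, ?_⟩
  · rw [sub_sub_cancel]
    exact I.mul_mem_left _ hgI
  · intro m hm
    have hmne : m ≠ m0 + v := by
      rintro rfl
      rw [mem_support_iff, coeff_sub, hF, add_comm m0 v, coeff_monomial_mul, hc0,
        coeff_monomial, if_pos rfl, inv_mul_cancel₀ hcne, sub_self] at hm
      exact hm rfl
    rw [mem_support_iff, coeff_sub, coeff_monomial, if_neg (Ne.symm hmne), zero_sub,
      neg_ne_zero, hF, coeff_monomial_mul'] at hm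
    split_ifs at hm with hvm
    · obtain ⟨m', rfl⟩ := exists_add_of_le hvm
      rw [add_tsub_cancel_left] at hm
      replace hm := right_ne_zero_of_mul hm
      rw [hg, coeff_homogeneousComponent] at hm
      split_ifs at hm with hdeg
      · rcases hmax m' (mem_support_iff.2 hm) with h | h
        · exact absurd (by rw [h, add_comm]) hmne
        · rw [add_comm m0 v]
          refine ⟨hr.add _ _ _ h, ?_⟩
          rw [expDeg_add, expDeg_add, ← hdeg, expDeg_eq m']
      · exact absurd rfl hm
    · exact absurd rfl hm

/-- Existence of normal forms. -/
theorem exists_nf (hr : MOrd r) {I : Ideal (PS K n)} (hI : IsHomog K n I) (u : Fin n →₀ ℕ) :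
    ∃ q : PS K n, monomial u 1 - q ∈ I ∧
      (monomial u (1 : K) ∉ initialIdealO K n r I → q = monomial u 1) ∧
      (monomial u (1 : K) ∈ initialIdealO K n r I → ∀ m ∈ q.support, r m u) ∧
      (∀ m ∈ q.support, expDeg n m = expDeg n u ∧
        monomial m (1 : K) ∉ initialIdealO K n r I) := by
  classical
  obtain ⟨w, hw⟩ := hr.wt (expDeg n u)
  obtain ⟨k, hk⟩ : ∃ k, k = wd w u := ⟨_, rfl⟩
  obtain ⟨e, he⟩ : ∃ e, e = expDeg n u := ⟨_, rfl⟩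
  rw [← he] at hw
  induction k using Nat.strong_induction_on generalizing u with
  | _ k ih =>
    by_cases hu : monomial u (1 : K) ∈ initialIdealO K n r I
    · obtain ⟨h, hh1, hh2⟩ := red_step hr hI hu
      have hex : ∀ m : Fin n →₀ ℕ, ∃ q : PS K n, m ∈ h.support → (monomial m 1 - q ∈ I ∧
          ∀ x ∈ q.support, r x u ∧ (expDeg n x = expDeg n u ∧
            monomial x (1 : K) ∉ initialIdealO K n r I)) := by
        intro m
        by_cases hm : m ∈ h.support
        · obtain ⟨h1, h2⟩ := hh2 m hm
          obtain ⟨q, hq1, hq2, hq3, hq4⟩ := ih (wd w m) (by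
            rw [hk]; exact hw m u (by rw [he, h2]) h1) m rfl (by rw [he, h2])
          refine ⟨q, fun _ => ⟨hq1, fun x hx => ⟨?_, by rw [(hq4 x hx).1, h2], (hq4 x hx).2⟩⟩⟩
          by_cases hmm : monomial m (1 : K) ∈ initialIdealO K n r I
          · exact hr.trans _ _ _ (hq3 hmm x hx) h1
          · rw [hq2 hmm, support_monomial, if_neg one_ne_zero, Finset.mem_singleton] at hx
            rw [hx]; exact h1
        · exact ⟨0, fun h => absurd h hm⟩
      choose q hq using hex
      have hsupp : ∀ x ∈ (∑ m ∈ h.support, C (coeff m h) * q m).support,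
          ∃ m ∈ h.support, x ∈ (q m).support := by
        intro x hx
        rw [mem_support_iff, coeff_sum] at hx
        obtain ⟨m, hm, hne⟩ := Finset.exists_ne_zero_of_sum_ne_zero hx
        rw [coeff_C_mul] at hne
        exact ⟨m, hm, mem_support_iff.2 (right_ne_zero_of_mul hne)⟩
      refine ⟨∑ m ∈ h.support, C (coeff m h) * q m, ?_, fun h => absurd hu h, fun _ m hm => ?_,
        fun m hm => ?_⟩
      · have : monomial u (1 : K) - ∑ m ∈ h.support, C (coeff m h) * q m =
            (monomial u 1 - h) + ∑ m ∈ h.support, C (coeff m h) * (monomial m 1 - q m) := by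
          have h3 : h = ∑ m ∈ h.support, C (coeff m h) * monomial m 1 := by
            conv_lhs => rw [h.as_sum]
            refine Finset.sum_congr rfl fun m _ => ?_
            rw [C_mul_monomial, mul_one]
          simp only [mul_sub, Finset.sum_sub_distrib]
          rw [← h3]
          ring
        rw [this]
        exact I.add_mem hh1 (I.sum_mem fun m hm => I.mul_mem_left _ (hq m hm).1)
      · obtain ⟨m', hm', hx⟩ := hsupp m hm
        exact ((hq m' hm').2 m hx).1
      · obtain ⟨m', hm', hx⟩ := hsupp m hm
        exact ((hq m' hm').2 m hx).2
    · refine ⟨monomial u 1, by simp, fun _ => rfl, fun h => absurd h hu, fun m hm => ?_⟩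
      rw [support_monomial, if_neg one_ne_zero, Finset.mem_singleton] at hm
      subst hm
      exact ⟨rfl, hu⟩

end Initial

section NormalForm

variable {K : Type} [Field K] {n : ℕ} {r : (Fin n →₀ ℕ) → (Fin n →₀ ℕ) → Prop}

theorem span_mon {Q : Submodule K (PS K n)} {f : PS K n}
    (h : ∀ u ∈ f.support, monomial u (1 : K) ∈ Q) : f ∈ Q := by
  rw [f.as_sum]
  refine Submodule.sum_mem _ fun u hu => ?_
  have := Q.smul_mem (coeff u f) (h u hu)
  rwa [smul_monomial, smul_eq_mul, mul_one] at this

/-- `P` is a normal form map for the ideal `I` with values in `Std`. -/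
structure IsNF (Std : Submodule K (PS K n)) (I : Ideal (PS K n)) (P : PS K n →ₗ[K] PS K n) :
    Prop where
  mem : ∀ f, P f ∈ Std
  sub : ∀ f, f - P f ∈ I
  kill : ∀ f ∈ I, P f = 0
  fix : ∀ f ∈ Std, P f = f
  gr : ∀ d, ∀ f ∈ polyGrade K n d, P f ∈ polyGrade K n d

/-- Lifting a normal form map. -/
def nfLift {Std : Submodule K (PS K n)} {I : Ideal (PS K n)} {P : PS K n →ₗ[K] PS K n}
    (h : IsNF Std I P) (I' : Ideal (PS K n)) : (PS K n ⧸ I) →ₗ[K] (PS K n ⧸ I') :=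
  Submodule.liftQ (I.restrictScalars K) ((Ideal.Quotient.mkₐ K I').toLinearMap ∘ₗ P)
    (fun f hf => by
      have := h.kill f hf
      simp [this])

theorem nfLift_mk {Std : Submodule K (PS K n)} {I : Ideal (PS K n)} {P : PS K n →ₗ[K] PS K n}
    (h : IsNF Std I P) (I' : Ideal (PS K n)) (f : PS K n) :
    nfLift h I' (Ideal.Quotient.mk I f) = Ideal.Quotient.mk I' (P f) := rfl

theorem nfLift_nfLift {Std : Submodule K (PS K n)} {I I' : Ideal (PS K n)}
    {P P' : PS K n →ₗ[K] PS K n} (h : IsNF Std I P) (h' : IsNF Std I' P') (x : PS K n ⧸ I) :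
    nfLift h' I (nfLift h I' x) = x := by
  obtain ⟨f, rfl⟩ := Ideal.Quotient.mk_surjective x
  rw [nfLift_mk, nfLift_mk, h'.fix _ (h.mem f), eq_comm, Ideal.Quotient.eq]
  exact h.sub f

/-- The equivalence of quotients from normal forms. -/
def nfE {Std : Submodule K (PS K n)} {I I' : Ideal (PS K n)}
    {P P' : PS K n →ₗ[K] PS K n} (h : IsNF Std I P) (h' : IsNF Std I' P') :
    (PS K n ⧸ I) ≃ₗ[K] (PS K n ⧸ I') :=
  LinearEquiv.ofLinearMap (nfLift h I') (nfLift h' I)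
    (LinearMap.ext fun x => nfLift_nfLift h' h x) (LinearMap.ext fun x => nfLift_nfLift h h' x)

theorem nfE_mk {Std : Submodule K (PS K n)} {I I' : Ideal (PS K n)}
    {P P' : PS K n →ₗ[K] PS K n} (h : IsNF Std I P) (h' : IsNF Std I' P') (f : PS K n) :
    nfE h h' (Ideal.Quotient.mk I f) = Ideal.Quotient.mk I' (P f) := rfl

theorem nfE_symm_mk {Std : Submodule K (PS K n)} {I I' : Ideal (PS K n)}
    {P P' : PS K n →ₗ[K] PS K n} (h : IsNF Std I P) (h' : IsNF Std I' P') (f : PS K n) :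
    (nfE h h').symm (Ideal.Quotient.mk I' f) = Ideal.Quotient.mk I (P' f) := rfl

theorem nfE_grEq {Std : Submodule K (PS K n)} {I I' : Ideal (PS K n)}
    {P P' : PS K n →ₗ[K] PS K n} (h : IsNF Std I P) (h' : IsNF Std I' P') :
    GrEq (quotGrade K n I) (quotGrade K n I') (nfE h h') := by
  intro p
  apply le_antisymm
  · rintro _ ⟨_, ⟨f, hf, rfl⟩, rfl⟩
    exact mk_mem_quotGrade (h.gr p f hf)
  · rintro _ ⟨f, hf, rfl⟩
    refine ⟨(nfE h h').symm (Ideal.Quotient.mk I' f), ?_, ?_⟩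
    · rw [nfE_symm_mk]
      exact mk_mem_quotGrade (h'.gr p f hf)
    · exact (nfE h h').apply_symm_apply _

/-- Polynomials supported on standard monomials. -/
def stdS (L : Ideal (PS K n)) : Submodule K (PS K n) where
  carrier := {f | ∀ m, monomial m (1 : K) ∈ L → coeff m f = 0}
  add_mem' := by
    intro f g hf hg m hm
    rw [coeff_add, hf m hm, hg m hm, add_zero]
  zero_mem' := by intro m _; simp
  smul_mem' := by
    intro c f hf m hm
    rw [coeff_smul, hf m hm, smul_zero]

theorem mem_stdS_iff {L : Ideal (PS K n)} {f : PS K n} :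
    f ∈ stdS L ↔ ∀ m ∈ f.support, monomial m (1 : K) ∉ L := by
  constructor
  · intro h m hm hL
    exact mem_support_iff.1 hm (h m hL)
  · intro h m hm
    by_contra hne
    exact h m (mem_support_iff.2 hne) hm

/-- Linear map with prescribed values on monomials. -/
def monConstr (q : (Fin n →₀ ℕ) → PS K n) : PS K n →ₗ[K] PS K n :=
  (basisMonomials (Fin n) K).constr K q

theorem monConstr_mon (q : (Fin n →₀ ℕ) → PS K n) (u : Fin n →₀ ℕ) :
    monConstr q (monomial u (1 : K)) = q u := by
  have := (basisMonomials (Fin n) K).constr_basis K q u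
  rwa [coe_basisMonomials] at this

theorem mem_polyGrade_iff {d : ℤ} {f : PS K n} :
    f ∈ polyGrade K n d ↔ ∀ m ∈ f.support, ((expDeg n m : ℕ) : ℤ) = d := by
  rcases lt_or_ge d 0 with h | h
  · rw [polyGrade_neg d h, Submodule.mem_bot]
    constructor
    · rintro rfl; simp
    · intro hh
      by_contra hne
      obtain ⟨m, hm⟩ := support_nonempty.2 hne
      have := hh m hm
      omega
  · obtain ⟨d, rfl⟩ := Int.eq_ofNat_of_zero_le h
    rw [mem_polyGrade_nat, isHom_iff]
    simp

theorem monConstr_gr (q : (Fin n →₀ ℕ) → PS K n)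
    (hq : ∀ u, ∀ m ∈ (q u).support, expDeg n m = expDeg n u) (d : ℤ) (f : PS K n)
    (hf : f ∈ polyGrade K n d) : monConstr q f ∈ polyGrade K n d := by
  refine span_mon (Q := (polyGrade K n d).comap (monConstr q)) fun u hu => ?_
  rw [Submodule.mem_comap, monConstr_mon, mem_polyGrade_iff]
  intro m hm
  rw [hq u m hm]
  exact mem_polyGrade_iff.1 hf u hu

open Classical in
/-- Projection to the standard monomials. -/
def stdP (L : Ideal (PS K n)) : PS K n →ₗ[K] PS K n :=
  monConstr fun u => if monomial u (1 : K) ∈ L then 0 else monomial u 1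

theorem stdP_isNF {I : Ideal (PS K n)} : IsNF (stdS (initialIdealO K n r I))
    (initialIdealO K n r I) (stdP (initialIdealO K n r I)) := by
  classical
  set L := initialIdealO K n r I with hL
  have hmon : ∀ f ∈ L, ∀ m ∈ f.support, monomial m (1 : K) ∈ L := by
    intro f hf m hm
    rw [hL, mem_initial] at hf
    exact monomial_mem_initial.2 (hf m hm)
  constructor
  · intro f
    refine span_mon (Q := (stdS L).comap (stdP L)) fun u hu => ?_
    rw [Submodule.mem_comap, stdP, monConstr_mon]
    split_ifs with h
    · exact Submodule.zero_mem _
    · rw [mem_stdS_iff, support_monomial, if_neg one_ne_zero]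
      intro m hm
      rw [Finset.mem_singleton.1 hm]
      exact h
  · intro f
    refine span_mon (Q := (L.restrictScalars K).comap (LinearMap.id - stdP L)) fun u hu => ?_
    rw [Submodule.mem_comap, LinearMap.sub_apply, stdP, monConstr_mon]
    split_ifs with h
    · simpa using h
    · simp
  · intro f hf
    refine span_mon (Q := LinearMap.ker (stdP L)) fun u hu => ?_
    rw [LinearMap.mem_ker, stdP, monConstr_mon, if_pos (hmon f hf u hu)]
  · intro f hf
    have : f ∈ LinearMap.eqLocus (stdP L) LinearMap.id := by
      refine span_mon fun u hu => ?_
      rw [LinearMap.mem_eqLocus, stdP, monConstr_mon, if_neg (mem_stdS_iff.1 hf u hu)]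
      rfl
    exact this
  · refine monConstr_gr _ fun u m hm => ?_
    split_ifs at hm
    · simp at hm
    · rw [support_monomial, if_neg one_ne_zero, Finset.mem_singleton] at hm
      rw [hm]

/-- Chosen normal forms. -/
def nf (hr : MOrd r) {I : Ideal (PS K n)} (hI : IsHomog K n I) (u : Fin n →₀ ℕ) : PS K n :=
  (exists_nf hr hI u).choose

theorem nf_spec (hr : MOrd r) {I : Ideal (PS K n)} (hI : IsHomog K n I) (u : Fin n →₀ ℕ) :
    monomial u 1 - nf hr hI u ∈ I ∧
      (monomial u (1 : K) ∉ initialIdealO K n r I → nf hr hI u = monomial u 1) ∧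
      (monomial u (1 : K) ∈ initialIdealO K n r I → ∀ m ∈ (nf hr hI u).support, r m u) ∧
      (∀ m ∈ (nf hr hI u).support, expDeg n m = expDeg n u ∧
        monomial m (1 : K) ∉ initialIdealO K n r I) :=
  (exists_nf hr hI u).choose_spec

theorem nf_isNF (hr : MOrd r) {I : Ideal (PS K n)} (hI : IsHomog K n I) :
    IsNF (stdS (initialIdealO K n r I)) I (monConstr (nf hr hI)) := by
  set L := initialIdealO K n r I with hL
  have hmem : ∀ f, monConstr (nf hr hI) f ∈ stdS L := by
    intro f
    refine span_mon (Q := (stdS L).comap (monConstr (nf hr hI))) fun u hu => ?_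
    rw [Submodule.mem_comap, monConstr_mon, mem_stdS_iff]
    exact fun m hm => ((nf_spec hr hI u).2.2.2 m hm).2
  have hsub : ∀ f, f - monConstr (nf hr hI) f ∈ I := by
    intro f
    refine span_mon (Q := (I.restrictScalars K).comap (LinearMap.id - monConstr (nf hr hI)))
      fun u hu => ?_
    rw [Submodule.mem_comap, LinearMap.sub_apply, monConstr_mon]
    exact (nf_spec hr hI u).1
  refine ⟨hmem, hsub, ?_, ?_, ?_⟩
  · intro f hf
    by_contra hne
    have h1 : monConstr (nf hr hI) f ∈ I := by
      have := I.sub_mem hf (hsub f)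
      rwa [sub_sub_cancel] at this
    obtain ⟨m, hm, hmL⟩ := exists_lm hr hI h1 hne
    exact mem_stdS_iff.1 (hmem f) m hm hmL
  · intro f hf
    have : f ∈ LinearMap.eqLocus (monConstr (nf hr hI)) LinearMap.id := by
      refine span_mon fun u hu => ?_
      rw [LinearMap.mem_eqLocus, monConstr_mon]
      exact (nf_spec hr hI u).2.1 (mem_stdS_iff.1 hf u hu)
    exact this
  · exact monConstr_gr _ fun u m hm => ((nf_spec hr hI u).2.2.2 m hm).1

/-- The graded equivalence between `S/in(I)` and `S/I`. -/
def phi (hr : MOrd r) {I : Ideal (PS K n)} (hI : IsHomog K n I) :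
    (PS K n ⧸ initialIdealO K n r I) ≃ₗ[K] (PS K n ⧸ I) := nfE stdP_isNF (nf_isNF hr hI)

theorem phi_grEq (hr : MOrd r) {I : Ideal (PS K n)} (hI : IsHomog K n I) :
    GrEq (quotGrade K n (initialIdealO K n r I)) (quotGrade K n I) (phi hr hI) :=
  nfE_grEq _ _

theorem phi_mk_std (hr : MOrd r) {I : Ideal (PS K n)} (hI : IsHomog K n I) {u : Fin n →₀ ℕ}
    (hu : monomial u (1 : K) ∉ initialIdealO K n r I) :
    phi hr hI (Ideal.Quotient.mk _ (monomial u 1)) = Ideal.Quotient.mk _ (monomial u 1) := by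
  rw [phi, nfE_mk, stdP, monConstr_mon, if_neg hu]

theorem phi_symm_mk (hr : MOrd r) {I : Ideal (PS K n)} (hI : IsHomog K n I) (u : Fin n →₀ ℕ) :
    (phi hr hI).symm (Ideal.Quotient.mk _ (monomial u 1)) = Ideal.Quotient.mk _ (nf hr hI u) := by
  rw [phi, nfE_symm_mk, monConstr_mon]

end NormalForm

section Degeneration

variable {K : Type} [Field K] {n : ℕ} {r : (Fin n →₀ ℕ) → (Fin n →₀ ℕ) → Prop}

/-- The one-parameter subgroup attached to a weight. -/
def dg (w : Fin n → ℕ) (t : Kˣ) : GL (Fin n) K where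
  val := Matrix.diagonal fun i => (t : K) ^ w i
  inv := Matrix.diagonal fun i => ((t⁻¹ : Kˣ) : K) ^ w i
  val_inv := by
    rw [Matrix.diagonal_mul_diagonal]
    simp
  inv_val := by
    rw [Matrix.diagonal_mul_diagonal]
    simp

theorem dg_inv (w : Fin n → ℕ) (t : Kˣ) : (dg w t)⁻¹ = dg w t⁻¹ := by
  apply Units.ext
  rfl

theorem cc_dg_mon (w : Fin n → ℕ) (t : Kˣ) (u : Fin n →₀ ℕ) :
    coordChange K n (dg w t) (monomial u 1) = ((t : K) ^ wd w u) • monomial u (1 : K) := by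
  have hX : ∀ i, ∑ j, ((dg w t : GL (Fin n) K) : Matrix (Fin n) (Fin n) K) j i • (X j : PS K n) =
      C ((t : K) ^ w i) * X i := by
    intro i
    rw [Finset.sum_eq_single i]
    · rw [smul_eq_C_mul]; simp [dg]
    · intro j _ hj
      simp [dg, Matrix.diagonal_apply_ne _ hj]
    · simp
  rw [coordChange, aeval_monomial, monomial_eq, smul_eq_C_mul]
  simp only [hX]
  rw [Finsupp.prod_fintype _ _ (by simp), Finsupp.prod_fintype _ _ (by simp), map_one, one_mul,
    map_one, one_mul]
  simp only [mul_pow, Finset.prod_mul_distrib, ← map_pow, ← map_prod, ← pow_mul]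
  rw [Finset.prod_pow_eq_pow_sum]
  rfl

theorem cc_dg_initial (w : Fin n → ℕ) (t : Kˣ) {I : Ideal (PS K n)} {f : PS K n}
    (hf : f ∈ initialIdealO K n r I) :
    coordChange K n (dg w t) f ∈ initialIdealO K n r I := by
  refine span_mon (Q := ((initialIdealO K n r I).restrictScalars K).comap
    (coordChange K n (dg w t)).toLinearMap) fun u hu => ?_
  change coordChange K n (dg w t) (monomial u 1) ∈ initialIdealO K n r I
  rw [cc_dg_mon, smul_eq_C_mul]
  exact Ideal.mul_mem_left _ _ (monomial_mem_initial.2 (mem_initial.1 hf u hu))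

theorem initial_map_dg (w : Fin n → ℕ) (t : Kˣ) (I : Ideal (PS K n)) :
    initialIdealO K n r I = (initialIdealO K n r I).map (ccE (dg w t) : PS K n →+* PS K n) := by
  apply le_antisymm
  · intro f hf
    have h : coordChange K n (dg w t) (coordChange K n (dg w t)⁻¹ f) = f :=
      (ccE (dg w t)).apply_symm_apply f
    rw [← h]
    refine Ideal.mem_map_of_mem (ccE (dg w t) : PS K n →+* PS K n) ?_
    rw [dg_inv]
    exact cc_dg_initial _ _ hf
  · rw [Ideal.map_le_iff_le_comap]
    intro f hf
    exact cc_dg_initial _ _ hf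

/-- Torus action on the quotient by the initial ideal. -/
def dq (r : (Fin n →₀ ℕ) → (Fin n →₀ ℕ) → Prop) (w : Fin n → ℕ) (t : Kˣ) (I : Ideal (PS K n)) :
    (PS K n ⧸ initialIdealO K n r I) ≃ₗ[K] (PS K n ⧸ initialIdealO K n r I) :=
  (Ideal.quotientEquivAlg _ _ (ccE (dg w t)) (initial_map_dg w t I)).toLinearEquiv

theorem dq_mk (w : Fin n → ℕ) (t : Kˣ) (I : Ideal (PS K n)) (f : PS K n) :
    dq r w t I (Ideal.Quotient.mk _ f) = Ideal.Quotient.mk _ (coordChange K n (dg w t) f) := rfl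

theorem mk_smul (I : Ideal (PS K n)) (c : K) (f : PS K n) :
    Ideal.Quotient.mk I (c • f) = c • Ideal.Quotient.mk I f := rfl

theorem dq_symm_mk_mon (w : Fin n → ℕ) (t : Kˣ) (I : Ideal (PS K n)) (u : Fin n →₀ ℕ) :
    (dq r w t I).symm (Ideal.Quotient.mk _ (monomial u 1)) =
      ((t : K) ^ wd w u)⁻¹ • Ideal.Quotient.mk _ (monomial u 1) := by
  rw [LinearEquiv.symm_apply_eq, map_smul, dq_mk, cc_dg_mon, mk_smul, smul_smul,
    inv_mul_cancel₀ (pow_ne_zero _ t.ne_zero), one_smul]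

theorem dq_grEq (w : Fin n → ℕ) (t : Kˣ) (I : Ideal (PS K n)) :
    GrEq (quotGrade K n (initialIdealO K n r I)) (quotGrade K n (initialIdealO K n r I))
      (dq r w t I) := by
  intro p
  apply le_antisymm
  · rintro _ ⟨_, ⟨f, hf, rfl⟩, rfl⟩
    exact mk_mem_quotGrade (cc_grade _ hf)
  · rintro _ ⟨f, hf, rfl⟩
    refine ⟨Ideal.Quotient.mk _ (coordChange K n (dg w t)⁻¹ f),
      mk_mem_quotGrade (cc_grade _ hf), ?_⟩
    exact congrArg (Ideal.Quotient.mk _) ((ccE (dg w t)).apply_symm_apply f)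

/-- Transport of a twisted action. -/
def twAct {V W : Type} [AddCommGroup V] [Module K V] [AddCommGroup W] [Module K W]
    (ν : PS K n →ₗ[K] W →ₗ[K] W) (α : PS K n →ₗ[K] PS K n) (e : V ≃ₗ[K] W) :
    PS K n →ₗ[K] V →ₗ[K] V :=
  LinearMap.mk₂ K (fun s m => e.symm (ν (α s) (e m)))
    (by intros; simp) (by intros; simp) (by intros; simp) (by intros; simp)

theorem twAct_apply {V W : Type} [AddCommGroup V] [Module K V] [AddCommGroup W] [Module K W]
    (ν : PS K n →ₗ[K] W →ₗ[K] W) (α : PS K n →ₗ[K] PS K n) (e : V ≃ₗ[K] W) (s : PS K n) (m : V) :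
    twAct ν α e s m = e.symm (ν (α s) (e m)) := rfl

/-- Polynomial functions on the affine line. -/
def polyFun (K : Type) [Field K] : Subalgebra K (K → K) :=
  (Polynomial.aeval (R := K) (id : K → K)).range

theorem polyFun_iff {a : K → K} : a ∈ polyFun K ↔ ∃ P : Polynomial K, ∀ t, a t = P.eval t := by
  have h : ∀ (P : Polynomial K) (t : K), Polynomial.aeval (R := K) (id : K → K) P t = P.eval t := by
    intro P t
    induction P using Polynomial.induction_on' with
    | add p q hp hq => rw [map_add, Pi.add_apply, hp, hq, Polynomial.eval_add]
    | monomial k c => simp [Polynomial.aeval_monomial]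
  constructor
  · rintro ⟨P, rfl⟩
    exact ⟨P, fun t => h P t⟩
  · rintro ⟨P, hP⟩
    exact ⟨P, funext fun t => (h P t).trans (hP t).symm⟩

theorem pow_mem_polyFun (c : K) (k : ℕ) : (fun t => c * t ^ k) ∈ polyFun K :=
  polyFun_iff.2 ⟨Polynomial.C c * Polynomial.X ^ k, fun t => by simp⟩

open Classical in
/-- The degenerating family of actions. -/
def muFam (hr : MOrd r) {I : Ideal (PS K n)} (hI : IsHomog K n I) (w : Fin n → ℕ) (t : K) :
    PS K n →ₗ[K] (PS K n ⧸ initialIdealO K n r I) →ₗ[K] (PS K n ⧸ initialIdealO K n r I) :=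
  if h : t = 0 then act _ else
    twAct (act I) (coordChange K n (dg w (Units.mk0 t h))).toLinearMap
      ((dq r w (Units.mk0 t h) I).trans (phi hr hI))

theorem muFam_mon (hr : MOrd r) {I : Ideal (PS K n)} (hI : IsHomog K n I) (w : Fin n → ℕ)
    {D : ℕ} (hw : ∀ a b, expDeg n a ≤ D → r a b → wd w a < wd w b) (a u : Fin n →₀ ℕ)
    (hD : expDeg n (a + u) ≤ D) :
    PF (polyFun K) 0 (fun t => muFam hr hI w t (monomial a 1) (Ideal.Quotient.mk _ (monomial u 1)))
      (act _ (monomial a 1) (Ideal.Quotient.mk _ (monomial u 1))) := by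
  classical
  set L := initialIdealO K n r I with hL
  by_cases hu : monomial u (1 : K) ∈ L
  · have : Ideal.Quotient.mk L (monomial u (1 : K)) = 0 := Ideal.Quotient.eq_zero_iff_mem.2 hu
    rw [this]
    simp only [map_zero]
    exact PF.zero
  have hzero : muFam hr hI w 0 (monomial a 1) (Ideal.Quotient.mk _ (monomial u 1)) =
      act _ (monomial a 1) (Ideal.Quotient.mk _ (monomial u 1)) := by
    rw [muFam, dif_pos rfl]
  refine ⟨?_, hzero⟩
  have hspec := nf_spec hr hI (a + u)
  have hwle : ∀ m ∈ (nf hr hI (a + u)).support, wd w m ≤ wd w (a + u) := by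
    intro m hm
    by_cases hb : monomial (a + u) (1 : K) ∈ L
    · exact (hw m _ (by rw [(hspec.2.2.2 m hm).1]; exact hD) (hspec.2.2.1 hb m hm)).le
    · rw [hspec.2.1 hb, support_monomial, if_neg one_ne_zero, Finset.mem_singleton] at hm
      rw [hm]
  have hcalc : (fun t => muFam hr hI w t (monomial a 1) (Ideal.Quotient.mk L (monomial u 1))) =
      fun t => ∑ m ∈ (nf hr hI (a + u)).support,
        (coeff m (nf hr hI (a + u)) * t ^ (wd w (a + u) - wd w m)) •
          Ideal.Quotient.mk L (monomial m (1 : K)) := by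
    funext t
    by_cases ht : t = 0
    · subst ht
      rw [hzero, act_mk, monomial_mul, one_mul]
      by_cases hb : monomial (a + u) (1 : K) ∈ L
      · rw [Ideal.Quotient.eq_zero_iff_mem.2 hb, eq_comm]
        refine Finset.sum_eq_zero fun m hm => ?_
        have := hw m _ (by rw [(hspec.2.2.2 m hm).1]; exact hD) (hspec.2.2.1 hb m hm)
        rw [zero_pow (by omega), mul_zero, zero_smul]
      · rw [hspec.2.1 hb, support_monomial, if_neg one_ne_zero, Finset.sum_singleton]
        simp
        rfl
    · obtain ⟨τ, rfl⟩ : ∃ τ : Kˣ, (τ : K) = t := ⟨Units.mk0 t ht, rfl⟩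
      have hτ : Units.mk0 (τ : K) ht = τ := Units.ext rfl
      rw [muFam, dif_neg ht, twAct_apply, hτ]
      change (dq r w τ I).symm ((phi hr hI).symm (act I (coordChange K n (dg w τ) (monomial a 1))
        (phi hr hI (dq r w τ I (Ideal.Quotient.mk _ (monomial u 1)))))) = _
      rw [dq_mk, cc_dg_mon, cc_dg_mon, mk_smul]
      simp only [map_smul, LinearMap.smul_apply]
      rw [phi_mk_std hr hI hu, act_mk, monomial_mul, one_mul, phi_symm_mk, smul_smul, ← pow_add, ← wd_add]
      conv_lhs => rw [(nf hr hI (a + u)).as_sum]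
      rw [map_sum, map_sum, Finset.smul_sum]
      refine Finset.sum_congr rfl fun m hm => ?_
      have h1 : monomial m (coeff m (nf hr hI (a + u))) =
          coeff m (nf hr hI (a + u)) • monomial m (1 : K) := by
        rw [smul_monomial, smul_eq_mul, mul_one]
      rw [h1, mk_smul, map_smul, dq_symm_mk_mon, smul_smul, smul_smul]
      congr 1
      rw [add_comm u a, pow_sub₀ _ ht (hwle m hm)]
      ring
  rw [hcalc]
  exact (PF.sum (x0 := (0 : K)) _ fun m _ => PF.smul (pow_mem_polyFun (K := K) _ _) _).1

theorem muFam_PF (hr : MOrd r) {I : Ideal (PS K n)} (hI : IsHomog K n I) (w : Fin n → ℕ)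
    {D : ℕ} (hw : ∀ a b, expDeg n a ≤ D → r a b → wd w a < wd w b) (a p : ℤ) (hap : a + p ≤ D)
    (s : PS K n) (hs : s ∈ polyGrade K n a) (m : PS K n ⧸ initialIdealO K n r I)
    (hm : m ∈ quotGrade K n (initialIdealO K n r I) p) :
    PF (polyFun K) 0 (fun t => muFam hr hI w t s m) (act _ s m) := by
  obtain ⟨f, hf, rfl⟩ := mem_quotGrade.1 hm
  have hmon : ∀ (m : Fin n →₀ ℕ) (c : K), monomial m c = c • monomial m (1 : K) := by
    intro m c
    rw [smul_monomial, smul_eq_mul, mul_one]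
  rw [s.as_sum, f.as_sum]
  simp only [map_sum, LinearMap.sum_apply]
  refine PF.sum _ fun c hc => PF.sum _ fun b hb => ?_
  rw [hmon b, hmon c, mk_smul]
  simp only [map_smul, LinearMap.smul_apply]
  refine (PF.map ((coeff c f) • LinearMap.id) (PF.map ((coeff b s) • LinearMap.id)
    (muFam_mon hr hI w hw b c ?_)))
  have h1 := mem_polyGrade_iff.1 hs b (by assumption)
  have h2 := mem_polyGrade_iff.1 hf c (by assumption)
  rw [expDeg_add]
  omega

theorem degen (hr : MOrd r) {I : Ideal (PS K n)} (hI : IsHomog K n I) (D : ℤ) :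
    ∃ (d : Kˣ → GL (Fin n) K)
      (Φ : Kˣ → ((PS K n ⧸ initialIdealO K n r I) ≃ₗ[K] (PS K n ⧸ I)))
      (μ : K → PS K n →ₗ[K] (PS K n ⧸ initialIdealO K n r I) →ₗ[K]
        (PS K n ⧸ initialIdealO K n r I)),
      (∀ t, GrEq (quotGrade K n (initialIdealO K n r I)) (quotGrade K n I) (Φ t)) ∧
      (∀ (t : Kˣ) s m, Φ t (μ t s m) = act I (coordChange K n (d t) s) (Φ t m)) ∧
      ∀ a p, a + p ≤ D → ∀ s ∈ polyGrade K n a,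
        ∀ m ∈ quotGrade K n (initialIdealO K n r I) p,
          PF (polyFun K) 0 (fun t => μ t s m) (act _ s m) := by
  obtain ⟨w, hw⟩ := hr.wt D.toNat
  refine ⟨dg w, fun t => (dq r w t I).trans (phi hr hI), muFam hr hI w,
    fun t => (dq_grEq w t I).trans (phi_grEq hr hI), ?_, ?_⟩
  · intro t s m
    have h : (t : K) ≠ 0 := t.ne_zero
    have ht : Units.mk0 (t : K) h = t := Units.ext rfl
    rw [muFam, dif_neg h, twAct_apply, ht, LinearEquiv.apply_symm_apply]
    rfl
  · intro a p hap s hs m hm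
    exact muFam_PF hr hI w hw a p (by omega) s hs m hm

end Degeneration

section Main

variable {K : Type} [Field K] {n : ℕ}

/-- Polynomial functions on the general linear group. -/
def polyGL (K : Type) [Field K] (n : ℕ) : Subalgebra K (GL (Fin n) K → K) :=
  (MvPolynomial.aeval (R := K) (fun (p : Fin n × Fin n) (g : GL (Fin n) K) =>
    (g : Matrix (Fin n) (Fin n) K) p.1 p.2)).range

theorem polyGL_eval (F : MvPolynomial (Fin n × Fin n) K) (g : GL (Fin n) K) :
    MvPolynomial.aeval (R := K) (fun (p : Fin n × Fin n) (g : GL (Fin n) K) =>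
      (g : Matrix (Fin n) (Fin n) K) p.1 p.2) F g =
    MvPolynomial.eval (fun p => (g : Matrix (Fin n) (Fin n) K) p.1 p.2) F := by
  induction F using MvPolynomial.induction_on with
  | C a => simp
  | add p q hp hq => rw [map_add, map_add, Pi.add_apply, hp, hq]
  | mul_X p i hp => rw [map_mul, map_mul, Pi.mul_apply, hp, aeval_X, eval_X]

theorem entry_mem_polyGL (i j : Fin n) :
    (fun g : GL (Fin n) K => (g : Matrix (Fin n) (Fin n) K) i j) ∈ polyGL K n :=
  ⟨X (i, j), by
    funext g
    exact (polyGL_eval _ _).trans (by simp)⟩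

theorem cc_PF (g0 : GL (Fin n) K) (s : PS K n) :
    PF (polyGL K n) g0 (fun g => coordChange K n g s) (coordChange K n g0 s) := by
  refine ⟨?_, rfl⟩
  induction s using MvPolynomial.induction_on with
  | C a =>
    have : (fun g : GL (Fin n) K => coordChange K n g (C a)) = fun _ => C a := by
      funext g
      simp [coordChange]
    rw [this]
    exact (PF.const (x0 := g0) _).1
  | add p q hp hq =>
    have : (fun g : GL (Fin n) K => coordChange K n g (p + q)) =
        (fun g => coordChange K n g p) + fun g => coordChange K n g q := by
      funext g
      simp
    rw [this]
    exact Submodule.add_mem _ hp hq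
  | mul_X p i hp =>
    have : (fun g : GL (Fin n) K => coordChange K n g (p * X i)) =
        fun g : GL (Fin n) K => ∑ j, ((g : Matrix (Fin n) (Fin n) K) j i) •
          (LinearMap.mulRight K (X j : PS K n)) (coordChange K n g p) := by
      funext g
      rw [map_mul, cc_X, Finset.mul_sum]
      refine Finset.sum_congr rfl fun j _ => ?_
      rw [mul_smul_comm]
      rfl
    rw [this]
    exact (PF.sum (x0 := g0) _ fun j _ => PF.smul' (entry_mem_polyGL j i)
      (PF.map (LinearMap.mulRight K (X j : PS K n)) ⟨hp, rfl⟩)).1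

/-- The action twisted by a coordinate change. -/
def gAct (I : Ideal (PS K n)) (g : GL (Fin n) K) :
    PS K n →ₗ[K] (PS K n ⧸ I) →ₗ[K] (PS K n ⧸ I) :=
  act I ∘ₗ (coordChange K n g).toLinearMap

theorem gAct_apply (I : Ideal (PS K n)) (g : GL (Fin n) K) (s : PS K n) (m : PS K n ⧸ I) :
    gAct I g s m = act I (coordChange K n g s) m := rfl

theorem gAct_PF (I : Ideal (PS K n)) (g0 : GL (Fin n) K) (s : PS K n) (m : PS K n ⧸ I) :
    PF (polyGL K n) g0 (fun g => gAct I g s m) (gAct I g0 s m) :=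
  PF.map ((act I).flip m) (cc_PF g0 s)

/-- Rank of the twisted differential. -/
def rkG (I J : Ideal (PS K n)) (g : GL (Fin n) K) (i : ℕ) (j : ℤ) : ℕ :=
  rk (quotGrade K n I) (quotGrade K n J) (gAct I g) (act J) i j

theorem rkG_eq (I J : Ideal (PS K n)) (g : GL (Fin n) K) (i : ℕ) (j : ℤ) :
    rkG I J g i j = rkQ I (J.map (coordChange K n g)) i j :=
  rk_iso (α := (ccE g).toLinearEquiv) (φ := LinearEquiv.refl K _) (ψ := qE g J)
    (fun s t => map_mul (ccE g) s t) (ccE_grEq g) (GrEq.refl _) (qE_grEq g J)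
    (fun _ _ => rfl) (qE_act g J) i j

theorem qE_symm_act (g : GL (Fin n) K) (J : Ideal (PS K n)) (s : PS K n)
    (x : PS K n ⧸ J.map (coordChange K n g)) :
    (qE g J).symm (act _ s x) = act J (coordChange K n g⁻¹ s) ((qE g J).symm x) := by
  rw [LinearEquiv.symm_apply_eq, qE_act, LinearEquiv.apply_symm_apply]
  congr 2
  exact ((ccE g).apply_symm_apply s).symm

theorem exists_unit [Infinite K] {a : K → K} (ha : a ∈ polyFun K) (h0 : a 0 ≠ 0) :
    ∃ t : Kˣ, a t ≠ 0 := by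
  obtain ⟨P, hP⟩ := polyFun_iff.1 ha
  have hP0 : P ≠ 0 := by
    rintro rfl
    exact h0 (by rw [hP]; simp)
  have hne : Polynomial.X * P ≠ 0 := mul_ne_zero Polynomial.X_ne_zero hP0
  by_contra hcon
  push Not at hcon
  apply hne
  apply Polynomial.funext
  intro t
  by_cases ht : t = 0
  · simp [ht]
  · have := hcon (Units.mk0 t ht)
    rw [hP] at this
    simp at this
    simp [this]

theorem rk_transport {I J L L' : Ideal (PS K n)} (h1 h2 d e : GL (Fin n) K)
    (Φ : (PS K n ⧸ L) ≃ₗ[K] (PS K n ⧸ I.map (coordChange K n h1)))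
    (Ψ : (PS K n ⧸ L') ≃ₗ[K] (PS K n ⧸ J.map (coordChange K n h2)))
    (μ : PS K n →ₗ[K] (PS K n ⧸ L) →ₗ[K] (PS K n ⧸ L))
    (ν : PS K n →ₗ[K] (PS K n ⧸ L') →ₗ[K] (PS K n ⧸ L'))
    (hΦ : GrEq (quotGrade K n L) (quotGrade K n (I.map (coordChange K n h1))) Φ)
    (hΨ : GrEq (quotGrade K n L') (quotGrade K n (J.map (coordChange K n h2))) Ψ)
    (hμ : ∀ s m, Φ (μ s m) = act _ (coordChange K n d s) (Φ m))
    (hν : ∀ s m, Ψ (ν s m) = act _ (coordChange K n e s) (Ψ m)) (i : ℕ) (j : ℤ) :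
    rk (quotGrade K n L) (quotGrade K n L') μ ν i j =
      rkG I J (h1⁻¹ * d * (h2⁻¹ * e)⁻¹) i j := by
  have e1 : GrEq (quotGrade K n L) (quotGrade K n I) (Φ.trans (qE h1 I).symm) :=
    GrEq.trans hΦ (GrEq.symm (qE_grEq h1 I))
  have e2 : GrEq (quotGrade K n L') (quotGrade K n J) (Ψ.trans (qE h2 J).symm) :=
    GrEq.trans hΨ (GrEq.symm (qE_grEq h2 J))
  have a1 : ∀ s m, (Φ.trans (qE h1 I).symm) (μ s m) =
      gAct I (h1⁻¹ * d * (h2⁻¹ * e)⁻¹) ((ccE (h2⁻¹ * e)).toLinearEquiv s)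
        ((Φ.trans (qE h1 I).symm) m) := by
    intro s m
    rw [LinearEquiv.trans_apply, LinearEquiv.trans_apply, hμ, qE_symm_act, gAct_apply]
    have h : coordChange K n h1⁻¹ (coordChange K n d s) =
        coordChange K n (h1⁻¹ * d * (h2⁻¹ * e)⁻¹) (coordChange K n (h2⁻¹ * e) s) := by
      rw [← cc_mul_apply, ← cc_mul_apply, inv_mul_cancel_right]
    exact congrArg (fun z => act I z _) h
  have a2 : ∀ s m, (Ψ.trans (qE h2 J).symm) (ν s m) =
      act J ((ccE (h2⁻¹ * e)).toLinearEquiv s) ((Ψ.trans (qE h2 J).symm) m) := by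
    intro s m
    rw [LinearEquiv.trans_apply, LinearEquiv.trans_apply, hν, qE_symm_act]
    have h : coordChange K n h2⁻¹ (coordChange K n e s) = coordChange K n (h2⁻¹ * e) s := by
      rw [← cc_mul_apply]
    exact congrArg (fun z => act J z _) h
  exact rk_iso (α := (ccE (h2⁻¹ * e)).toLinearEquiv) (fun s t => map_mul (ccE _) s t)
    (ccE_grEq _) e1 e2 a1 a2 i j

theorem exists_good [Infinite K] {r r' : (Fin n →₀ ℕ) → (Fin n →₀ ℕ) → Prop} (hr : MOrd r)
    (hr' : MOrd r') {I J : Ideal (PS K n)} (hI : IsHomog K n I) (hJ : IsHomog K n J)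
    (h1 h2 : GL (Fin n) K) (i : ℕ) (j : ℤ) :
    ∃ g0 : GL (Fin n) K, rkQ (initialIdealO K n r (I.map (coordChange K n h1)))
      (initialIdealO K n r' (J.map (coordChange K n h2))) i j ≤ rkG I J g0 i j := by
  obtain ⟨d, Φ, μ, hΦ, hμ, hμPF⟩ := degen hr (map_isHomog h1 hI) j
  obtain ⟨d', Φ', ν, hΦ', hν, hνPF⟩ := degen hr' (map_isHomog h2 hJ) j
  have hL := initial_isHomog (r := r) (I.map (coordChange K n h1))
  have hL' := initial_isHomog (r := r') (J.map (coordChange K n h2))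
  have := strand_fin hL hL' (i + 1) j
  obtain ⟨a, ha, ha0, hle⟩ := rk_semicont (quotGrade_isGr hL).neg (quotGrade_isGr hL').neg
    hμPF hνPF i
  obtain ⟨t, ht⟩ := exists_unit ha ha0
  refine ⟨h1⁻¹ * d t * (h2⁻¹ * d' t)⁻¹, (hle t ht).trans (le_of_eq ?_)⟩
  exact rk_transport h1 h2 (d t) (d' t) (Φ t) (Φ' t) (μ t) (ν t) (hΦ t) (hΦ' t) (hμ t) (hν t) i j

theorem generally_rk [Infinite K] {r r' : (Fin n →₀ ℕ) → (Fin n →₀ ℕ) → Prop} (hr : MOrd r)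
    (hr' : MOrd r') {I J : Ideal (PS K n)} (hI : IsHomog K n I) (hJ : IsHomog K n J)
    (h1 h2 : GL (Fin n) K) (i : ℕ) (j : ℤ) :
    generally K n fun g => rkQ (initialIdealO K n r (I.map (coordChange K n h1)))
      (initialIdealO K n r' (J.map (coordChange K n h2))) i j ≤
        rkQ I (J.map (coordChange K n g)) i j := by
  obtain ⟨g0, hg0⟩ := exists_good hr hr' hI hJ h1 h2 i j
  have := strand_fin hI hJ (i + 1) j
  obtain ⟨a, ⟨F, hF⟩, ha0, hle⟩ := rk_semicont (R := polyGL K n) (x0 := g0) (j := j)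
    (quotGrade_isGr hI).neg (quotGrade_isGr hJ).neg
    (μ := fun g => gAct I g) (μ0 := gAct I g0) (ν := fun _ => act J) (ν0 := act J)
    (fun _ _ _ s _ m _ => gAct_PF I g0 s m) (fun _ _ _ s _ m _ => PF.const _) i
  have hF' : ∀ g, a g = eval (fun p => (g : Matrix (Fin n) (Fin n) K) p.1 p.2) F := by
    intro g
    rw [← hF]
    exact polyGL_eval F g
  refine ⟨F, ?_, fun g hg => ?_⟩
  · rintro rfl
    exact ha0 (by rw [hF']; simp)
  · beta_reduce
    rw [← rkG_eq]
    exact hg0.trans (hle g (by rw [hF']; exact hg))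

theorem generally_exists [Infinite K] {P : GL (Fin n) K → Prop} (h : generally K n P) :
    ∃ g, P g := by
  obtain ⟨F, hF, hP⟩ := h
  have hne : F * (Matrix.mvPolynomialX (Fin n) (Fin n) K).det ≠ 0 :=
    mul_ne_zero hF (Matrix.det_mvPolynomialX_ne_zero (Fin n) K)
  by_contra hcon
  push Not at hcon
  apply hne
  apply MvPolynomial.funext
  intro x
  rw [map_zero, map_mul]
  by_contra hx
  have hdet : (Matrix.of fun i j => x (i, j)).det ≠ 0 := by
    have h2 := right_ne_zero_of_mul hx
    have h3 := Matrix.eval_det_mvPolynomialX (Fin n) K x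
    rw [← h3]
    exact h2
  refine hcon (Matrix.GeneralLinearGroup.mkOfDetNeZero _ hdet) (hP _ ?_)
  exact left_ne_zero_of_mul hx

theorem cdQ_eq {r r' : (Fin n →₀ ℕ) → (Fin n →₀ ℕ) → Prop} (hr : MOrd r)
    (hr' : MOrd r') {I J : Ideal (PS K n)} (hI : IsHomog K n I) (hJ : IsHomog K n J)
    (h1 h2 g : GL (Fin n) K) (i : ℕ) (j : ℤ) :
    cdQ I (J.map (coordChange K n g)) i j =
      cdQ (initialIdealO K n r (I.map (coordChange K n h1)))
      (initialIdealO K n r' (J.map (coordChange K n h2))) i j :=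
  cdim_iso ((qE_grEq h1 I).trans (phi_grEq hr (map_isHomog h1 hI)).symm)
    ((qE_grEq g J).symm.trans ((qE_grEq h2 J).trans (phi_grEq hr' (map_isHomog h2 hJ)).symm)) i j

theorem generally_all [Infinite K] {r r' : (Fin n →₀ ℕ) → (Fin n →₀ ℕ) → Prop} (hr : MOrd r)
    (hr' : MOrd r') {I J : Ideal (PS K n)} (hI : IsHomog K n I) (hJ : IsHomog K n J)
    (h1 h2 : GL (Fin n) K) (j : ℤ) :
    generally K n fun g => ∀ i : ℕ, torQQ K n I (J.map (coordChange K n g)) i j ≤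
      torQQ K n (initialIdealO K n r (I.map (coordChange K n h1)))
        (initialIdealO K n r' (J.map (coordChange K n h2))) i j := by
  have hex := fun i => generally_rk hr hr' hI hJ h1 h2 i j
  choose F hF hle using hex
  refine ⟨∏ i ∈ Finset.range (j.toNat + 1), F i, Finset.prod_ne_zero_iff.2 fun i _ => hF i, ?_⟩
  intro g hg i
  rw [map_prod, Finset.prod_ne_zero_iff] at hg
  have hgJ := map_isHomog g hJ
  have hL := initial_isHomog (r := r) (I.map (coordChange K n h1))
  have hL' := initial_isHomog (r := r') (J.map (coordChange K n h2))
  rcases lt_or_ge j (i : ℤ) with hij | hij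
  · rw [torQQ_vanish hI hgJ i j hij]
    exact Nat.zero_le _
  · have hle' : ∀ k ≤ i, _ := fun k hk => hle k g (hg k (Finset.mem_range.2 (by omega)))
    cases i with
    | zero =>
      rw [torQQ_zero hI hgJ, torQQ_zero hL hL', cdQ_eq hr hr' hI hJ h1 h2 g]
      have := hle' 0 le_rfl
      omega
    | succ i =>
      rw [torQQ_succ hI hgJ, torQQ_succ hL hL', cdQ_eq hr hr' hI hJ h1 h2 g]
      have := hle' i (by omega)
      have := hle' (i + 1) le_rfl
      omega

end Main

/-- **Theorem 2.8(i)** (Caviglia–Murai): fix `j` and homogeneous ideals `I, J ⊆ S`.  For a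
general change of coordinates `g ∈ GL_n(K)`,
`dim_K Tor_i(S/I, S/g(J))_j ≤ dim_K Tor_i(S/Gin_lex(I), S/Gin_oplex(J))_j` for all `i`. -/
theorem tor_dim_general_le_gins_quotients [Infinite K] (j : ℤ)
    (I J : Ideal (PS K n)) (hI : IsHomog K n I) (hJ : IsHomog K n J)
    (GinI : Ideal (PS K n))
    (hGinI : generally K n (fun g =>
      initialIdealO K n (lexLt n) (Ideal.map (coordChange K n g) I) = GinI))
    (GinJ : Ideal (PS K n))
    (hGinJ : generally K n (fun g =>
      initialIdealO K n (oplexLt n) (Ideal.map (coordChange K n g) J) = GinJ))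
 :
    generally K n (fun g => ∀ i : ℕ,
      torQQ K n I (Ideal.map (coordChange K n g) J) i j ≤ torQQ K n GinI GinJ i j) := by
  obtain ⟨h1, rfl⟩ := generally_exists hGinI
  obtain ⟨h2, rfl⟩ := generally_exists hGinJ
  exact generally_all lexLt_mOrd oplexLt_mOrd hI hJ h1 h2 j

end
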